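/- arXiv:1006.4696 — 3 statements merged into one kernel-verified Lean document; each statement's English description precedes it below -/
import Mathlib

section
/- (Tightness, lowest equilibrium direction) A competitive equilibrium W of a unit-demand market is the lowest competitive equilibrium (minimal price vector) if and only if for every nonempty subset T of goods all of whose prices at W are strictly positive, the demand set D^T(W) = {i ∈ I : ∃ j ∈ T with p_i^j(u_i(W)) = p^j(u(W))} has cardinality at least |T| + 1. -/
attribute [local instance] Classical.propDecidable

/-- A unit-demand market: finite sets of buyers `I` and goods `J`, with utility
functions `u i j : ℝ → ℝ` that are continuous, strictly decreasing, surjective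
(domain and range cover all of `ℝ`), and eventually non-positive. -/
structure Market (I J : Type) [Fintype I] [Fintype J] where
  u : I → J → ℝ → ℝ
  cont : ∀ i j, Continuous (u i j)
  anti : ∀ i j, StrictAnti (u i j)
  surj : ∀ i j, Function.Surjective (u i j)
  evNonpos : ∀ i j, ∃ x : ℝ, ∀ y ≥ x, u i j y ≤ 0

/-- A competitive equilibrium: nonnegative prices `p`, nonnegative payoffs `w`,
and a partial matching `μ` (injective on matched buyers) such that every buyer
receives a most preferred good at the prices, unmatched buyers have payoff `0`,
and unmatched goods have price `0`. -/
def IsEquilib {I J : Type} [Fintype I] [Fintype J] (M : Market I J)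
    (p : J → ℝ) (w : I → ℝ) (μ : I → Option J) : Prop :=
  (∀ i i' j, μ i = some j → μ i' = some j → i = i') ∧
  (∀ j, 0 ≤ p j) ∧ (∀ i, 0 ≤ w i) ∧
  (∀ i j, μ i = some j → w i = M.u i j (p j)) ∧
  (∀ i j, M.u i j (p j) ≤ w i) ∧
  (∀ i, μ i = none → w i = 0) ∧
  (∀ j, (∀ i, μ i ≠ some j) → p j = 0)

/-- `W` is the lowest competitive equilibrium: its prices are componentwise
below those of every competitive equilibrium. -/
def IsLowest {I J : Type} [Fintype I] [Fintype J] (M : Market I J)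
    (p : J → ℝ) (w : I → ℝ) (μ : I → Option J) : Prop :=
  IsEquilib M p w μ ∧ ∀ p' w' μ', IsEquilib M p' w' μ' → ∀ j, p j ≤ p' j

/-- `W` is the highest competitive equilibrium: its prices are componentwise
above those of every competitive equilibrium. -/
def IsHighest {I J : Type} [Fintype I] [Fintype J] (M : Market I J)
    (p : J → ℝ) (w : I → ℝ) (μ : I → Option J) : Prop :=
  IsEquilib M p w μ ∧ ∀ p' w' μ', IsEquilib M p' w' μ' → ∀ j, p' j ≤ p j

/-- Induced payoff `u_i(p) = max({u_i^j(p^j) : j} ∪ {0})`. -/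
noncomputable def inducedPayoff {I J : Type} [Fintype I] [Fintype J] (M : Market I J)
    (p : J → ℝ) (i : I) : ℝ :=
  (insert (0:ℝ) (Finset.univ.image fun j => M.u i j (p j))).max' (Finset.insert_nonempty _ _)

/-- Induced price `p^j(u) = max({p_i^j(u_i) : i} ∪ {0})`, where `p_i^j` is the
inverse of `u_i^j`. -/
noncomputable def inducedPrice {I J : Type} [Fintype I] [Fintype J] (M : Market I J)
    (w : I → ℝ) (j : J) : ℝ :=
  (insert (0:ℝ) (Finset.univ.image fun i => Function.invFun (M.u i j) (w i))).max' (Finset.insert_nonempty _ _)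

/-!
Let `p` be equilibrium prices. If `T` is the set of goods that are cheaper in some other
equilibrium, then `T` has at most `|T|` interested buyers: each of them is better off in the other
equilibrium, so holds there a good that has become cheaper.

Conversely, let `T` be a set of `n` goods with positive prices and only `n` interested buyers.
These buyers hold exactly the goods in `T`. Set reserve prices on `T` so slightly below `p` that no
other buyer wants to enter, and auction `T` among the interested buyers. An ascending auction with
increment `δ` can only end once every buyer holds a good, and since its last bid is the first one
on some good, that good ends within `δ` of its reserve. Letting `δ → 0` gives envy-free prices at
which some good is at its reserve, hence below `p`. The auction may push other goods above `p`;
taking the minimum with `p` preserves envy-freeness. The owners of `T` have thereby permuted `T`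
among themselves, and leaving the rest of the market as it was gives an equilibrium that undercuts
`p`.
-/

open Set Filter Topology Function

section EnvyFree

variable {B G α β : Type*}

/-- Prices `q` and an assignment `σ` of goods to buyers are envy-free for the payoffs `v` when no
buyer would rather have another good at its price. -/
def EnvyFree [LE β] (v : B → G → α → β) (σ : B → G) (q : G → α) : Prop :=
  ∀ b g, v b g (q g) ≤ v b (σ b) (q (σ b))

variable [LinearOrder α] [LinearOrder β] {v : B → G → α → β} {σ τ : B → G} {p q : G → α}

theorem EnvyFree.exists_inf (hv : ∀ b g, StrictAnti (v b g)) (hσ : Injective σ) (hτ : Injective τ)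
    (hp : EnvyFree v σ p) (hq : EnvyFree v τ q) :
    ∃ ρ : B → G, Injective ρ ∧ EnvyFree v ρ (p ⊓ q) := by
  let gains (b : B) : Prop := v b (σ b) (p (σ b)) < v b (τ b) (q (τ b))
  have lt_of_gains (b : B) (hb : gains b) : q (τ b) < p (τ b) :=
    (hv b (τ b)).lt_iff_gt.1 ((hp b (τ b)).trans_lt hb)
  have gains_of_lt (b : B) (hb : q (σ b) < p (σ b)) : gains b :=
    (hv b (σ b) hb).trans_le (hq b (σ b))
  let ρ (b : B) : G := if gains b then τ b else σ b
  have ρ_pos {b : B} (hb : gains b) : ρ b = τ b := if_pos hb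
  have ρ_neg {b : B} (hb : ¬gains b) : ρ b = σ b := if_neg hb
  have ne_of_gains {b c : B} (hb : gains b) (hc : ¬gains c) : τ b ≠ σ c := fun hbc =>
    hc (gains_of_lt c (hbc ▸ lt_of_gains b hb))
  refine ⟨ρ, fun b c hbc => ?_, fun b g => ?_⟩
  · by_cases hb : gains b <;> by_cases hc : gains c
    · exact hτ (by rwa [ρ_pos hb, ρ_pos hc] at hbc)
    · exact absurd (by rwa [ρ_pos hb, ρ_neg hc] at hbc) (ne_of_gains hb hc)
    · exact absurd (by rw [← ρ_neg hb, hbc, ρ_pos hc]) (ne_of_gains hc hb)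
    · exact hσ (by rwa [ρ_neg hb, ρ_neg hc] at hbc)
  · have payoff_eq : v b (ρ b) ((p ⊓ q) (ρ b)) =
        max (v b (σ b) (p (σ b))) (v b (τ b) (q (τ b))) := by
      by_cases hb : gains b
      · rw [ρ_pos hb, max_eq_right hb.le, Pi.inf_apply, inf_eq_right.2 (lt_of_gains b hb).le]
      · rw [ρ_neg hb, max_eq_left (not_lt.1 hb), Pi.inf_apply,
          inf_eq_left.2 (not_lt.1 fun hlt => hb (gains_of_lt b hlt))]
    rw [payoff_eq, Pi.inf_apply, (hv b g).antitone.map_inf]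
    exact max_le_max (hp b g) (hq b g)

end EnvyFree

/-- A stage of the ascending auction with reserve prices `r` and increment `δ`: good `g` has price
`q g` and is held by the buyer `m g`, if any. Holders are content up to `δ`, and some good has been
bid on at most once. For `δ = 0` holders are content at the prices `q` themselves and some good is
at its reserve price. -/
structure IsAuctionState {B G : Type*} (v : B → G → ℝ → ℝ) (r : G → ℝ) (δ : ℝ) (q : G → ℝ)
    (m : G → Option B) : Prop where
  eq_of_holder_eq : ∀ ⦃g g' b⦄, m g = some b → m g' = some b → g = g'
  reserve_le : r ≤ q
  eq_reserve_of_unsold : ∀ g, m g = none → q g = r g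
  holder_content : ∀ g b, m g = some b → ∀ g', v b g' (q g' + δ) ≤ v b g (q g)
  exists_le_reserve_add : ∃ g, q g ≤ r g + δ

namespace IsAuctionState

variable {B G : Type*} {v : B → G → ℝ → ℝ} {r q : G → ℝ} {δ : ℝ} {m : G → Option B}

theorem initial [Nonempty G] (v : B → G → ℝ → ℝ) (r : G → ℝ) (hδ : 0 ≤ δ) :
    IsAuctionState v r δ r fun _ => none where
  eq_of_holder_eq := by simp
  reserve_le := le_rfl
  eq_reserve_of_unsold _ _ := rfl
  holder_content := by simp
  exists_le_reserve_add := ⟨Classical.arbitrary G, by linarith⟩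

theorem exists_unsold [Finite B] (hcard : Nat.card B ≤ Nat.card G)
    (hq : IsAuctionState v r δ q m) {b : B} (hb : ∀ g, m g ≠ some b) : ∃ g, m g = none := by
  by_contra! hsold
  choose holder hholder using fun g => Option.ne_none_iff_exists'.1 (hsold g)
  have holder_inj : Injective holder := fun g g' hgg =>
    hq.eq_of_holder_eq (hholder g) (hgg ▸ hholder g')
  obtain ⟨g, rfl⟩ := (holder_inj.bijective_of_nat_card_le hcard).surjective b
  exact hb g (hholder g)

theorem bid (hv : ∀ b g, Antitone (v b g)) (hδ : 0 ≤ δ) (hq : IsAuctionState v r δ q m)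
    {b : B} (hb : ∀ g, m g ≠ some b) {g₀ : G} (hg₀ : m g₀ = none) {j : G}
    (hj : ∀ g, v b g (q g + δ) ≤ v b j (q j + δ)) :
    IsAuctionState v r δ (update q j (q j + δ)) (update m j (some b)) := by
  have q_le : q ≤ update q j (q j + δ) := le_update_self_iff.2 (by linarith)
  refine ⟨fun g g' c hg hg' => ?_, hq.reserve_le.trans q_le, fun g hg => ?_,
    fun g c hg g' => ?_, g₀, ?_⟩
  · by_cases hgj : g = j <;> by_cases hgj' : g' = j
    · exact hgj.trans hgj'.symm
    · simp_all
    · simp_all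
    · rw [update_of_ne hgj] at hg
      rw [update_of_ne hgj'] at hg'
      exact hq.eq_of_holder_eq hg hg'
  · rcases eq_or_ne g j with rfl | hgj
    · simp at hg
    · rw [update_of_ne hgj] at hg ⊢
      exact hq.eq_reserve_of_unsold g hg
  · refine (hv c g' (by linarith [q_le g'] : q g' + δ ≤ _)).trans ?_
    rcases eq_or_ne g j with rfl | hgj
    · obtain rfl : b = c := by simpa using hg
      simpa using hj g'
    · rw [update_of_ne hgj] at hg ⊢
      exact hq.holder_content g c hg g'
  · rcases eq_or_ne g₀ j with rfl | hgj
    · rw [update_self, hq.eq_reserve_of_unsold g₀ hg₀]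
    · rw [update_of_ne hgj, hq.eq_reserve_of_unsold g₀ hg₀]
      linarith

theorem exists_price_bound [Finite B] [Finite G] (hv : ∀ b g, Antitone (v b g))
    (hlim : ∀ b g, Tendsto (v b g) atTop atBot) (r : G → ℝ) (Δ : ℝ) :
    ∃ C : G → ℝ, ∀ δ ≤ Δ, ∀ q m, IsAuctionState v r δ q m → q ≤ C := by
  have unattractive : ∀ᶠ x in atTop, ∀ b g g', v b g x < v b g' (r g' + 2 * Δ) := by
    simp only [eventually_all]
    exact fun b g g' => (hlim b g).eventually_lt_atBot _
  obtain ⟨C, hC⟩ := eventually_atTop.1 unattractive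
  refine ⟨fun g => max C (r g), fun δ hδ q m hq g => ?_⟩
  rcases hm : m g with _ | b
  · exact (hq.eq_reserve_of_unsold g hm).trans_le (le_max_right _ _)
  · obtain ⟨g', hg'⟩ := hq.exists_le_reserve_add
    refine le_max_of_le_left (not_lt.1 fun hlt => (hC (q g) hlt.le b g g').not_ge ?_)
    exact (hv b g' (by linarith)).trans (hq.holder_content g b hm g')

/-- The prices reached when each good `g` has been bid on `k g` times. -/
def bidPrice (r : G → ℝ) (δ : ℝ) (k : G → ℕ) : G → ℝ :=
  fun g => r g + δ * k g

theorem bidPrice_update_succ (r : G → ℝ) (δ : ℝ) (k : G → ℕ) (j : G) :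
    bidPrice r δ (update k j (k j + 1)) = update (bidPrice r δ k) j (bidPrice r δ k j + δ) := by
  ext g
  rcases eq_or_ne g j with rfl | hgj
  · simp only [bidPrice, update_self]
    push_cast
    ring
  · simp only [bidPrice, update_of_ne hgj]

theorem exists_maximal_bids [Finite B] [Finite G] [Nonempty G] (hv : ∀ b g, Antitone (v b g))
    (hlim : ∀ b g, Tendsto (v b g) atTop atBot) (r : G → ℝ) (hδ : 0 < δ) :
    ∃ k, Maximal (fun k => ∃ m, IsAuctionState v r δ (bidPrice r δ k) m) k := by
  obtain ⟨C, hC⟩ := exists_price_bound hv hlim r δ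
  have bids_le : {k | ∃ m, IsAuctionState v r δ (bidPrice r δ k) m} ⊆
      Iic fun g => ⌈(C g - r g) / δ⌉₊ := by
    rintro k ⟨m, hk⟩ g
    have price_le : r g + δ * k g ≤ C g := hC δ le_rfl _ m hk g
    have : (k g : ℝ) ≤ (C g - r g) / δ := (le_div_iff₀ hδ).2 (by linarith)
    exact_mod_cast this.trans (Nat.le_ceil _)
  have := Fintype.ofFinite G
  refine ((finite_Iic _).subset bids_le).exists_maximal ⟨0, fun _ => none, ?_⟩
  have bidPrice_zero : bidPrice r δ 0 = r := by ext; simp [bidPrice]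
  exact bidPrice_zero.symm ▸ initial v r hδ.le

theorem exists_complete_of_pos [Finite B] [Finite G] [Nonempty G]
    (hcard : Nat.card B ≤ Nat.card G) (hv : ∀ b g, Antitone (v b g))
    (hlim : ∀ b g, Tendsto (v b g) atTop atBot) (r : G → ℝ) (hδ : 0 < δ) :
    ∃ q m, IsAuctionState v r δ q m ∧ ∀ b, ∃ g, m g = some b := by
  obtain ⟨k, ⟨m, hk⟩, kmax⟩ := exists_maximal_bids hv hlim r hδ
  refine ⟨bidPrice r δ k, m, hk, fun b => ?_⟩
  by_contra! hb
  obtain ⟨g₀, hg₀⟩ := hk.exists_unsold hcard hb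
  obtain ⟨j, hj⟩ := Finite.exists_max fun g => v b g (bidPrice r δ k g + δ)
  have hbid := hk.bid hv hδ.le hb hg₀ hj
  rw [← bidPrice_update_succ] at hbid
  have k_lt : k < update k j (k j + 1) := lt_update_self_iff.2 (k j).lt_succ_self
  exact (kmax ⟨_, hbid⟩ k_lt.le).not_gt k_lt

theorem isClosed_setOf [Finite G] (hcont : ∀ b g, Continuous (v b g)) (r : G → ℝ)
    (m : G → Option B) : IsClosed {x : ℝ × (G → ℝ) | IsAuctionState v r x.1 x.2 m} := by
  have eq_inter : {x : ℝ × (G → ℝ) | IsAuctionState v r x.1 x.2 m} =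
      {_x | ∀ ⦃g g' b⦄, m g = some b → m g' = some b → g = g'} ∩ {x | r ≤ x.2} ∩
      (⋂ (g) (_ : m g = none), {x | x.2 g = r g}) ∩
      (⋂ (g) (b) (_ : m g = some b) (g'), {x | v b g' (x.2 g' + x.1) ≤ v b g (x.2 g)}) ∩
      ⋃ g, {x | x.2 g ≤ r g + x.1} := by
    ext x
    simp only [mem_inter_iff, mem_iInter, mem_iUnion, mem_ofPred_eq]
    exact ⟨fun ⟨h₁, h₂, h₃, h₄, h₅⟩ => ⟨⟨⟨⟨h₁, h₂⟩, h₃⟩, h₄⟩, h₅⟩,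
      fun ⟨⟨⟨⟨h₁, h₂⟩, h₃⟩, h₄⟩, h₅⟩ => ⟨h₁, h₂, h₃, h₄, h₅⟩⟩
  rw [eq_inter]
  refine (((isClosed_const.inter (isClosed_le (by fun_prop) (by fun_prop))).inter ?_).inter
    ?_).inter (isClosed_iUnion_of_finite fun g => isClosed_le (by fun_prop) (by fun_prop))
  · exact isClosed_biInter fun g _ => isClosed_eq (by fun_prop) (by fun_prop)
  · exact isClosed_iInter fun g => isClosed_iInter fun b => isClosed_iInter fun _ =>
      isClosed_iInter fun g' => isClosed_le (by fun_prop) (by fun_prop)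

/-- The increments `δ ∈ [0, 1]` admitting a complete auction state form the projection of a compact
set, hence a closed set; it contains `(0, 1]`, so it contains `0`. -/
theorem exists_complete_zero [Finite B] [Finite G] [Nonempty G]
    (hcard : Nat.card B ≤ Nat.card G) (hcont : ∀ b g, Continuous (v b g))
    (hv : ∀ b g, Antitone (v b g)) (hlim : ∀ b g, Tendsto (v b g) atTop atBot) (r : G → ℝ) :
    ∃ q m, IsAuctionState v r 0 q m ∧ ∀ b, ∃ g, m g = some b := by
  obtain ⟨C, hC⟩ := exists_price_bound hv hlim r 1
  let complete : Set (G → Option B) := {m | ∀ b, ∃ g, m g = some b}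
  let K : Set (ℝ × (G → ℝ)) :=
    Icc 0 1 ×ˢ Icc r C ∩ ⋃ m ∈ complete, {x | IsAuctionState v r x.1 x.2 m}
  have isCompact_K : IsCompact K := (isCompact_Icc.prod isCompact_Icc).inter_right
    ((toFinite complete).isClosed_biUnion fun m _ => isClosed_setOf hcont r m)
  have Ioc_subset : Ioc 0 1 ⊆ Prod.fst '' K := by
    intro δ hδ
    obtain ⟨q, m, hq, hm⟩ := exists_complete_of_pos hcard hv hlim r hδ.1
    exact ⟨(δ, q), ⟨⟨⟨hδ.1.le, hδ.2⟩, hq.reserve_le, hC δ hδ.2 q m hq⟩,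
      mem_iUnion₂_of_mem hm hq⟩, rfl⟩
  have Icc_subset : Icc 0 1 ⊆ Prod.fst '' K := by
    rw [← closure_Ioc zero_ne_one]
    exact closure_minimal Ioc_subset (isCompact_K.image continuous_fst).isClosed
  obtain ⟨⟨_, q⟩, ⟨-, hq⟩, rfl⟩ := Icc_subset (left_mem_Icc.2 zero_le_one)
  obtain ⟨m, hm, hq⟩ := mem_iUnion₂.1 hq
  exact ⟨q, m, hq, hm⟩

end IsAuctionState

theorem exists_envyFree_of_reserve {B G : Type*} [Finite B] [Finite G] [Nonempty G]
    (hcard : Nat.card B ≤ Nat.card G) {v : B → G → ℝ → ℝ} (hcont : ∀ b g, Continuous (v b g))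
    (hv : ∀ b g, Antitone (v b g)) (hlim : ∀ b g, Tendsto (v b g) atTop atBot) (r : G → ℝ) :
    ∃ (σ : B → G) (q : G → ℝ), Injective σ ∧ EnvyFree v σ q ∧ r ≤ q ∧ ∃ g, q g = r g := by
  obtain ⟨q, m, hq, hm⟩ := IsAuctionState.exists_complete_zero hcard hcont hv hlim r
  choose σ hσ using hm
  obtain ⟨g, hg⟩ := hq.exists_le_reserve_add
  refine ⟨σ, q, fun b c hbc => ?_, fun b g => ?_, hq.reserve_le, g, ?_⟩
  · exact Option.some.inj ((hσ b).symm.trans (hbc ▸ hσ c))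
  · simpa using hq.holder_content (σ b) b (hσ b) g
  · exact (hg.trans_eq (add_zero _)).antisymm (hq.reserve_le g)

theorem EnvyFree.exists_le_touching_reserve {B G : Type*} [Finite G] [Nonempty G]
    {v : B → G → ℝ → ℝ} (hcont : ∀ b g, Continuous (v b g)) (hv : ∀ b g, StrictAnti (v b g))
    (hlim : ∀ b g, Tendsto (v b g) atTop atBot) {σ : B → G} (hσ : Injective σ) {p r : G → ℝ}
    (hp : EnvyFree v σ p) (hrp : r ≤ p) :
    ∃ (ρ : B → G) (q : G → ℝ), Injective ρ ∧ EnvyFree v ρ q ∧ r ≤ q ∧ q ≤ p ∧ ∃ g, q g = r g := by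
  have := Finite.of_injective σ hσ
  obtain ⟨τ, q, hτ, hq, hrq, g, hg⟩ := exists_envyFree_of_reserve
    (Nat.card_le_card_of_injective σ hσ) hcont (fun b g => (hv b g).antitone) hlim r
  obtain ⟨ρ, hρ, hpq⟩ := hp.exists_inf hv hσ hτ hq
  exact ⟨ρ, p ⊓ q, hρ, hpq, le_inf hrp hrq, inf_le_left, g, hg ▸ inf_eq_right.2 (hg ▸ hrp g)⟩

section Market

variable {I J : Type} [Fintype I] [Fintype J] {M : Market I J} {p : J → ℝ} {w : I → ℝ}
  {μ : I → Option J}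

theorem Market.invFun_eq_iff (M : Market I J) {i : I} {j : J} {x y : ℝ} :
    invFun (M.u i j) y = x ↔ y = M.u i j x := by
  rw [← (M.anti i j).injective.eq_iff, invFun_eq (M.surj i j y)]

theorem Market.tendsto_atTop_atBot (M : Market I J) (i : I) (j : J) :
    Tendsto (M.u i j) atTop atBot :=
  tendsto_atTop_atBot_of_antitone (M.anti i j).antitone fun c => (M.surj i j c).imp fun _ => Eq.le

/-- The demand set `D^T(W)` of the buyers interested in some good of `T`. -/
noncomputable def interestedBuyers (M : Market I J) (w : I → ℝ) (T : Finset J) : Finset I :=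
  Finset.univ.filter fun i => ∃ j ∈ T, invFun (M.u i j) (w i) = inducedPrice M w j

namespace IsEquilib

theorem eq_of_matched (h : IsEquilib M p w μ) {i i' : I} {j : J} (hi : μ i = some j)
    (hi' : μ i' = some j) : i = i' :=
  h.1 i i' j hi hi'

theorem price_nonneg (h : IsEquilib M p w μ) (j : J) : 0 ≤ p j :=
  h.2.1 j

theorem payoff_nonneg (h : IsEquilib M p w μ) (i : I) : 0 ≤ w i :=
  h.2.2.1 i

theorem payoff_eq (h : IsEquilib M p w μ) {i : I} {j : J} (hi : μ i = some j) :
    w i = M.u i j (p j) :=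
  h.2.2.2.1 i j hi

theorem le_payoff (h : IsEquilib M p w μ) (i : I) (j : J) : M.u i j (p j) ≤ w i :=
  h.2.2.2.2.1 i j

theorem payoff_eq_zero (h : IsEquilib M p w μ) {i : I} (hi : μ i = none) : w i = 0 :=
  h.2.2.2.2.2.1 i hi

theorem price_eq_zero (h : IsEquilib M p w μ) {j : J} (hj : ∀ i, μ i ≠ some j) : p j = 0 :=
  h.2.2.2.2.2.2 j hj

theorem exists_owner (h : IsEquilib M p w μ) {j : J} (hj : 0 < p j) : ∃ i, μ i = some j := by
  by_contra! hunsold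
  exact hj.ne' (h.price_eq_zero hunsold)

theorem inducedPrice_eq (h : IsEquilib M p w μ) {j : J} (hj : 0 < p j) :
    inducedPrice M w j = p j := by
  have invFun_le (i : I) : invFun (M.u i j) (w i) ≤ p j := by
    rw [← (M.anti i j).le_iff_ge, invFun_eq (M.surj i j (w i))]
    exact h.le_payoff i j
  obtain ⟨i, hi⟩ := h.exists_owner hj
  refine le_antisymm (Finset.max'_le _ _ _ ?_) (Finset.le_max' _ _ ?_)
  · simpa [hj.le] using invFun_le
  · rw [← M.invFun_eq_iff.2 (h.payoff_eq hi)]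
    exact Finset.mem_insert_of_mem (Finset.mem_image_of_mem _ (Finset.mem_univ i))

theorem mem_interestedBuyers (h : IsEquilib M p w μ) {T : Finset J} (hT : ∀ j ∈ T, 0 < p j)
    {i : I} : i ∈ interestedBuyers M w T ↔ ∃ j ∈ T, w i = M.u i j (p j) := by
  simp only [interestedBuyers, Finset.mem_filter_univ]
  refine exists_congr fun j => and_congr_right fun hj => ?_
  rw [h.inducedPrice_eq (hT j hj), M.invFun_eq_iff]

theorem card_interestedBuyers_le (h : IsEquilib M p w μ) {p' : J → ℝ} {w' : I → ℝ}
    {μ' : I → Option J} (h' : IsEquilib M p' w' μ') {T : Finset J}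
    (hT : ∀ j, j ∈ T ↔ p' j < p j) : (interestedBuyers M w T).card ≤ T.card := by
  have price_pos (j : J) (hj : j ∈ T) : 0 < p j := (h'.price_nonneg j).trans_lt ((hT j).1 hj)
  refine Finset.card_le_card_of_forall_subsingleton (fun i j => μ' i = some j) (fun i hi => ?_)
    fun j _ i hi i' hi' => h'.eq_of_matched hi.2 hi'.2
  obtain ⟨j, hj, hij⟩ := (h.mem_interestedBuyers price_pos).1 hi
  have payoff_lt : w i < w' i :=
    hij.trans_lt ((M.anti i j ((hT j).1 hj)).trans_le (h'.le_payoff i j))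
  rcases hm : μ' i with _ | j'
  · exact absurd (h'.payoff_eq_zero hm) ((h.payoff_nonneg i).trans_lt payoff_lt).ne'
  · rw [h'.payoff_eq hm] at payoff_lt
    exact ⟨j', (hT j').2 ((M.anti i j').lt_iff_gt.1 ((h.le_payoff i j').trans_lt payoff_lt)), rfl⟩

theorem exists_matched_of_card_le (h : IsEquilib M p w μ) {T : Finset J} (hT : ∀ j ∈ T, 0 < p j)
    (hcard : (interestedBuyers M w T).card ≤ T.card) {i : I} (hi : i ∈ interestedBuyers M w T) :
    ∃ j ∈ T, μ i = some j := by
  choose owner howner using fun j : T => h.exists_owner (hT j j.2)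
  let f (j : T) : interestedBuyers M w T :=
    ⟨owner j, (h.mem_interestedBuyers hT).2 ⟨j, j.2, h.payoff_eq (howner j)⟩⟩
  have f_inj : Injective f := fun j j' hjj => by
    have owner_eq : owner j = owner j' := congrArg Subtype.val hjj
    exact Subtype.ext (Option.some.inj ((howner j).symm.trans (owner_eq ▸ howner j')))
  have f_bij : Bijective f := f_inj.bijective_of_nat_card_le (by simpa using hcard)
  obtain ⟨j, hj⟩ := f_bij.surjective ⟨i, hi⟩
  obtain rfl : owner j = i := congrArg Subtype.val hj
  exact ⟨j, j.2, howner j⟩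

theorem exists_reserve (h : IsEquilib M p w μ) {j : J} (hj : 0 < p j) :
    ∃ x ∈ Ico 0 (p j), ∀ i, w i ≠ M.u i j (p j) → M.u i j x ≤ w i := by
  have undesired : ∀ᶠ x in 𝓝 (p j), ∀ i, w i ≠ M.u i j (p j) → M.u i j x ≤ w i := by
    refine eventually_all.2 fun i => eventually_imp_distrib_left.2 fun hi => ?_
    exact ((M.cont i j).tendsto _).eventually_le_const ((h.le_payoff i j).lt_of_ne' hi)
  obtain ⟨x, hxi, hx⟩ :=
    ((undesired.filter_mono nhdsWithin_le_nhds).and (Ioo_mem_nhdsLT hj)).exists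
  exact ⟨x, Ioo_subset_Ico_self hx, hxi⟩

theorem permute (h : IsEquilib M p w μ) {q : J → ℝ} (hq₀ : 0 ≤ q) (hqp : q ≤ p)
    (π : Equiv.Perm J) (hπ : ∀ j, p j = 0 → π j = j)
    (matched : ∀ i j, μ i = some j → ∀ j', M.u i j' (q j') ≤ M.u i (π j) (q (π j)))
    (unmatched : ∀ i, μ i = none → ∀ j, M.u i j (q j) ≤ 0) :
    IsEquilib M q (fun i => ((μ i).map π).elim 0 fun j => M.u i j (q j))
      (fun i => (μ i).map π) := by
  have payoff_nonneg {i : I} {j : J} (hij : μ i = some j) : 0 ≤ M.u i (π j) (q (π j)) := calc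
    0 ≤ w i := h.payoff_nonneg i
    _ = M.u i j (p j) := h.payoff_eq hij
    _ ≤ M.u i j (q j) := (M.anti i j).antitone (hqp j)
    _ ≤ M.u i (π j) (q (π j)) := matched i j hij j
  refine ⟨fun i i' j hi hi' => ?_, hq₀, fun i => ?_, fun i j hij => by simp only [hij, Option.elim],
    fun i j => ?_, fun i hi => by simp only [hi, Option.elim], fun j hj => ?_⟩
  · obtain ⟨k, hk, rfl⟩ := Option.map_eq_some_iff.1 hi
    obtain ⟨k', hk', hkk⟩ := Option.map_eq_some_iff.1 hi'
    exact h.eq_of_matched hk (π.injective hkk ▸ hk')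
  · rcases hi : μ i with _ | j <;> simp only [hi, Option.map, Option.elim]
    · exact le_rfl
    · exact payoff_nonneg hi
  · rcases hi : μ i with _ | k <;> simp only [hi, Option.map, Option.elim]
    · exact unmatched i hi j
    · exact matched i k hi j
  · have p_eq_zero : p (π.symm j) = 0 := h.price_eq_zero fun i hi => hj i (by simp [hi])
    have j_fixed : π.symm j = j := by simpa using (hπ _ p_eq_zero).symm
    exact ((hqp j).trans_eq (j_fixed ▸ p_eq_zero)).antisymm (hq₀ j)

theorem exists_reassign (h : IsEquilib M p w μ) {T : Finset J} (hT : ∀ j ∈ T, 0 < p j)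
    {q : T → ℝ} (hq₀ : ∀ j, 0 ≤ q j) (hqp : ∀ j, q j ≤ p j) (ρ : Equiv.Perm T)
    (envyFree : ∀ (i : I) (j : T), μ i = some ↑j →
      ∀ j' : T, M.u i j' (q j') ≤ M.u i (ρ j) (q (ρ j)))
    (undesired : ∀ i, (∀ j ∈ T, μ i ≠ some j) → ∀ j : T, M.u i j (q j) ≤ w i) :
    ∃ p' w' μ', IsEquilib M p' w' μ' ∧ ∀ j : T, p' j = q j := by
  let p' : J → ℝ := extend Subtype.val q p
  have p'_mem (j : T) : p' j = q j := Subtype.val_injective.extend_apply q p j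
  have p'_notMem {j : J} (hj : j ∉ T) : p' j = p j := extend_apply' q p j (by simpa using hj)
  have p'_mem_Icc (j : J) : p' j ∈ Icc 0 (p j) := by
    by_cases hj : j ∈ T
    · exact p'_mem ⟨j, hj⟩ ▸ ⟨hq₀ ⟨j, hj⟩, hqp ⟨j, hj⟩⟩
    · exact ⟨(h.price_nonneg j).trans_eq (p'_notMem hj).symm, (p'_notMem hj).le⟩
  let π : Equiv.Perm J := Equiv.Perm.ofSubtype ρ
  have π_mem (j : T) : π j = ρ j := Equiv.Perm.ofSubtype_apply_coe ρ j
  have π_notMem {j : J} (hj : j ∉ T) : π j = j := Equiv.Perm.ofSubtype_apply_of_not_mem ρ hj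
  have envyFree' (i : I) (j k : T) (hij : μ i = some ↑j) :
      M.u i k (p' k) ≤ M.u i (π j) (p' (π j)) := by
    rw [π_mem, p'_mem, p'_mem]
    exact envyFree i j hij k
  have payoff_mono {i : I} {j : J} (hij : μ i = some j) : w i ≤ M.u i (π j) (p' (π j)) := by
    rw [h.payoff_eq hij]
    by_cases hj : j ∈ T
    · exact ((M.anti i j).antitone (p'_mem_Icc j).2).trans (envyFree' i ⟨j, hj⟩ ⟨j, hj⟩ hij)
    · rw [π_notMem hj, p'_notMem hj]
  have le_payoff' {i : I} {k : J} (hik : k ∈ T → ∀ j ∈ T, μ i ≠ some j) :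
      M.u i k (p' k) ≤ w i := by
    by_cases hk : k ∈ T
    · exact p'_mem ⟨k, hk⟩ ▸ undesired i (hik hk) ⟨k, hk⟩
    · exact p'_notMem hk ▸ h.le_payoff i k
  refine ⟨p', _, _, h.permute (fun j => (p'_mem_Icc j).1) (fun j => (p'_mem_Icc j).2) π
    (fun j hj => π_notMem fun hjT => (hT j hjT).ne' hj) (fun i j hij k => ?_)
    (fun i hi j => (le_payoff' (by simp [hi])).trans_eq (h.payoff_eq_zero hi)), p'_mem⟩
  by_cases hjk : j ∈ T ∧ k ∈ T
  · exact envyFree' i ⟨j, hjk.1⟩ ⟨k, hjk.2⟩ hij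
  · refine (le_payoff' fun hk l hl hil => hjk ⟨?_, hk⟩).trans (payoff_mono hij)
    rwa [Option.some.inj (hij.symm.trans hil)]

theorem exists_price_lt (h : IsEquilib M p w μ) {T : Finset J} (hne : T.Nonempty)
    (hT : ∀ j ∈ T, 0 < p j) (hcard : (interestedBuyers M w T).card ≤ T.card) :
    ∃ p' w' μ', IsEquilib M p' w' μ' ∧ ∃ j, p' j < p j := by
  choose owner howner using fun j : T => h.exists_owner (hT j j.2)
  choose r hr r_undesired using fun j : T => h.exists_reserve (hT j j.2)
  have p_envyFree : EnvyFree (fun b g : T => M.u (owner b) g) id fun j => p j := fun b g =>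
    (h.le_payoff (owner b) g).trans_eq (h.payoff_eq (howner b))
  have := hne.to_subtype
  obtain ⟨ρ, q, ρ_inj, q_envyFree, r_le, q_le, g, hg⟩ := p_envyFree.exists_le_touching_reserve
    (fun _ _ => M.cont _ _) (fun _ _ => M.anti _ _) (fun _ _ => M.tendsto_atTop_atBot _ _)
    injective_id fun j => (hr j).2.le
  have owners_envyFree (i : I) (j : T) (hij : μ i = some ↑j) (j' : T) :
      M.u i j' (q j') ≤ M.u i (ρ j) (q (ρ j)) := by
    obtain rfl := h.eq_of_matched (howner j) hij
    exact q_envyFree j j'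
  have undesired (i : I) (hi : ∀ j ∈ T, μ i ≠ some j) (j : T) : M.u i j (q j) ≤ w i := by
    refine ((M.anti i j).antitone (r_le j)).trans (r_undesired j i fun hij => ?_)
    obtain ⟨k, hk, hik⟩ :=
      h.exists_matched_of_card_le hT hcard ((h.mem_interestedBuyers hT).2 ⟨j, j.2, hij⟩)
    exact hi k hk hik
  obtain ⟨p', w', μ', h', hp'⟩ := h.exists_reassign hT (fun j => (hr j).1.trans (r_le j)) q_le
    (Equiv.ofBijective ρ (Finite.injective_iff_bijective.1 ρ_inj)) owners_envyFree undesired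
  exact ⟨p', w', μ', h', g, hp' g ▸ hg ▸ (hr g).2⟩

end IsEquilib

end Market

/-- Tightness (lowest equilibrium): a competitive equilibrium `W` is the lowest
one iff for every nonempty set `T` of goods with strictly positive prices, at
least `|T| + 1` buyers are interested in `T` (attain the induced price of some
good in `T`). -/
theorem tightness_lowest {I J : Type} [Fintype I] [Fintype J] (M : Market I J)
    (p : J → ℝ) (w : I → ℝ) (μ : I → Option J) (h : IsEquilib M p w μ) :
    IsLowest M p w μ ↔
      ∀ T : Finset J, T.Nonempty → (∀ j ∈ T, 0 < p j) →
        T.card + 1 ≤ (Finset.univ.filter fun i : I =>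
          ∃ j ∈ T, Function.invFun (M.u i j) (w i) = inducedPrice M w j).card := by
  constructor
  · rintro ⟨-, lowest⟩ T hne hT
    by_contra! hcard
    obtain ⟨p', w', μ', h', j, hj⟩ := h.exists_price_lt hne hT (Nat.lt_succ_iff.1 hcard)
    exact (lowest p' w' μ' h' j).not_gt hj
  · refine fun tight => ⟨h, fun p' w' μ' h' => ?_⟩
    by_contra! hlt
    obtain ⟨j, hj⟩ := hlt
    let T : Finset J := Finset.univ.filter fun j => p' j < p j
    have mem_T (j : J) : j ∈ T ↔ p' j < p j := Finset.mem_filter_univ j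
    have price_pos (j : J) (hj : j ∈ T) : 0 < p j :=
      (h'.price_nonneg j).trans_lt ((mem_T j).1 hj)
    exact (tight T ⟨j, (mem_T j).2 hj⟩ price_pos).not_gt
      (Nat.lt_succ_of_le (h.card_interestedBuyers_le h' mem_T))
end

section
/- (Tightness, highest equilibrium direction) A competitive equilibrium W of a unit-demand market is the highest competitive equilibrium (maximal price vector) if and only if for every nonempty subset S of buyers all of whose payoffs at W are strictly positive, the demand set D_S(W) = {j ∈ J : ∃ i ∈ S with u_i^j(p^j(W)) = u_i(W)} has cardinality at least |S| + 1. -/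
attribute [local instance] Classical.propDecidable

/-!
Compare equilibria with reserve prices `r`: all prices are at least `r`, and unsold goods cost
exactly `r`. The point is transitivity: if `p` are equilibrium prices for the reserve `r`, then
equilibrium prices for the reserve `p` are equilibrium prices for `r`. Indeed, both allocations
match the buyers whose payoff falls bijectively to the goods whose price rises, so the new
allocation can be used for these buyers and the old one for everybody else.

Suppose that the prices `p` are highest but the buyers in `S` demand only a set `D` of at most `|S|`
goods. Take equilibria `(q ε, ν ε)` for the reserve `p + ε` on `D` and `p` elsewhere. As `ε → 0`
they accumulate at an equilibrium for the reserve `p`, whose prices are `p` by transitivity and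
maximality, and whose allocation therefore matches `S` onto `D`. For some `ε > 0` the allocation
`ν ε` is this one, so all of `D` is sold at `q ε`; thus `q ε` are equilibrium prices for the reserve
`p`, hence for `r`, although `q ε > p` on `D`. Conversely, if some equilibrium price exceeds `p`,
the buyers who lose demand at `p` only goods whose price rises, and there are at most as many of
those goods as losers.

Equilibria for a given reserve are limits of outcomes of ascending auctions whose bid increment
tends to `0`.
-/

section Development

open Filter Topology

variable {I J : Type} {μ ν : I → Option J} {S : Finset I}

/-- A partial assignment of goods to buyers is a matching if no good is assigned twice. -/
def IsMatching (ν : I → Option J) : Prop :=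
  ∀ i i' j, ν i = some j → ν i' = some j → i = i'

lemma IsMatching.card_image (hν : IsMatching ν) {D : Finset J}
    (hSD : S.image ν ⊆ D.image some) : (S.image ν).card = S.card := by
  refine Finset.card_image_of_injOn fun i hi i' _ he => ?_
  obtain ⟨j, -, hj⟩ := Finset.mem_image.1 (hSD (Finset.mem_image_of_mem ν hi))
  exact hν i i' j hj.symm (he ▸ hj.symm)

lemma IsMatching.image_eq_of_card_le (hν : IsMatching ν) {D : Finset J}
    (hSD : S.image ν ⊆ D.image some) (hcard : D.card ≤ S.card) :
    S.image ν = D.image some := by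
  refine Finset.eq_of_subset_of_card_le hSD ?_
  rw [hν.card_image hSD]
  exact Finset.card_image_le.trans hcard

lemma card_le_card_of_image_some_subset {D : Finset J}
    (hDS : D.image some ⊆ S.image ν) : D.card ≤ S.card := by
  rw [← Finset.card_image_of_injective D (Option.some_injective J)]
  exact (Finset.card_le_card hDS).trans Finset.card_image_le

/-- The assignment after buyer `i` has outbid the holder of good `k`, who is left unmatched. -/
noncomputable def award (ν : I → Option J) (i : I) (k : J) : I → Option J :=
  fun i' => if i' = i then some k else if ν i' = some k then none else ν i'

lemma award_self (ν : I → Option J) (i : I) (k : J) : award ν i k i = some k := if_pos rfl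

lemma award_eq_some {i i' : I} {j k : J} (h : award ν i k i' = some j) :
    i' = i ∧ j = k ∨ i' ≠ i ∧ j ≠ k ∧ ν i' = some j := by
  unfold award at h
  split_ifs at h <;> grind

lemma award_of_ne {i i' : I} {j k : J} (hi : i' ≠ i) (hj : j ≠ k)
    (h : ν i' = some j) : award ν i k i' = some j := by
  simp [award, hi, hj, h]

lemma isMatching_award (hν : IsMatching ν) (i : I) (k : J) :
    IsMatching (award ν i k) := by
  intro i₁ i₂ j h₁ h₂
  rcases award_eq_some h₁ with ⟨rfl, rfl⟩ | ⟨-, hj₁, h₁⟩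
  · rcases award_eq_some h₂ with ⟨rfl, -⟩ | ⟨-, hj₂, -⟩
    · rfl
    · exact absurd rfl hj₂
  · rcases award_eq_some h₂ with ⟨-, hj₂⟩ | ⟨-, -, h₂⟩
    · exact absurd hj₂ hj₁
    · exact hν i₁ i₂ j h₁ h₂

variable [Fintype I] [Fintype J]

/-- The payoff of buyer `i` at prices `q` under the assignment `ν`; being unmatched is worth `0`. -/
noncomputable def payoff (M : Market I J) (q : J → ℝ) (ν : I → Option J) (i : I) : ℝ :=
  (ν i).elim 0 fun j => M.u i j (q j)

/-- The goods demanded at prices `p` by the buyers in `S`, whose payoffs are `w`. -/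
noncomputable def demandSet (M : Market I J) (p : J → ℝ) (w : I → ℝ) (S : Finset I) : Finset J :=
  Finset.univ.filter fun j => ∃ i ∈ S, M.u i j (p j) = w i

/-- An individually rational matching at prices `q` that respects the reserve prices `r`: no price
is below its reserve, and unsold goods are priced at their reserve. -/
structure IsAllocation (M : Market I J) (r q : J → ℝ) (ν : I → Option J) : Prop where
  matching : IsMatching ν
  reserve_le : r ≤ q
  unsold : ∀ j, (∀ i, ν i ≠ some j) → q j = r j
  payoff_nonneg : ∀ i, 0 ≤ payoff M q ν i

/-- A state of the ascending auction with bid increment `δ`: no buyer holding a good would rather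
raise the price of some good by `δ` to obtain it. -/
structure IsAuctionState_s6 (M : Market I J) (r : J → ℝ) (δ : ℝ) (q : J → ℝ) (ν : I → Option J) : Prop
    extends IsAllocation M r q ν where
  le_payoff : ∀ i, ν i ≠ none → ∀ k, M.u i k (q k + δ) ≤ payoff M q ν i

/-- An equilibrium with reserve prices `r` up to the bid increment `δ`: no buyer at all, matched or
not, would rather raise the price of some good by `δ` to obtain it. -/
structure IsApproxEquilib (M : Market I J) (r : J → ℝ) (δ : ℝ) (q : J → ℝ) (ν : I → Option J) : Prop
    extends IsAllocation M r q ν where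
  le_payoff : ∀ i k, M.u i k (q k + δ) ≤ payoff M q ν i

/-- A competitive equilibrium with reserve prices `r` in place of `0`. The payoffs are determined by
the prices and the assignment, so they are not part of the data. -/
abbrev IsReserveEquilib (M : Market I J) (r q : J → ℝ) (ν : I → Option J) : Prop :=
  IsApproxEquilib M r 0 q ν

variable {M : Market I J} {p q r r' : J → ℝ} {δ : ℝ}

lemma payoff_of_eq_some {i : I} {j : J} (h : ν i = some j) :
    payoff M q ν i = M.u i j (q j) := by
  simp [payoff, h]

lemma payoff_of_eq_none {i : I} (h : ν i = none) : payoff M q ν i = 0 := by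
  simp [payoff, h]

lemma continuous_payoff (M : Market I J) (ν : I → Option J) (i : I) :
    Continuous fun q => payoff M q ν i := by
  cases hi : ν i with
  | none => simpa only [payoff_of_eq_none hi] using continuous_const
  | some j =>
    simp only [payoff_of_eq_some hi]
    exact (M.cont i j).comp (continuous_apply j)

lemma mem_demandSet {w : I → ℝ} {j : J} :
    j ∈ demandSet M p w S ↔ ∃ i ∈ S, M.u i j (p j) = w i := by
  simp [demandSet]

lemma image_subset_demandSet (hpos : ∀ i ∈ S, 0 < payoff M p ν i) :
    S.image ν ⊆ (demandSet M p (payoff M p ν) S).image some := by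
  refine Finset.image_subset_iff.2 fun i hi => ?_
  cases hνi : ν i with
  | none => exact absurd (payoff_of_eq_none hνi) (hpos i hi).ne'
  | some j =>
    exact Finset.mem_image_of_mem _ (mem_demandSet.2 ⟨i, hi, (payoff_of_eq_some hνi).symm⟩)

/-! ### Existence of equilibria with reserve prices -/

lemma exists_price_bound (M : Market I J) :
    ∃ B : J → ℝ, ∀ r q ν, IsAllocation M r q ν → q ≤ r ⊔ B := by
  choose x hx using M.evNonpos
  choose B hB using fun j => (Set.finite_range fun i => x i j).bddAbove
  refine ⟨B, fun r q ν h j => ?_⟩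
  by_cases hsold : ∃ i, ν i = some j
  · obtain ⟨i, hi⟩ := hsold
    refine le_sup_of_le_right (le_trans ?_ (hB j ⟨i, rfl⟩))
    by_contra! hlt
    have hneg : M.u i j (q j) < 0 := (M.anti i j hlt).trans_le (hx i j _ le_rfl)
    exact hneg.not_ge (payoff_of_eq_some (M := M) hi ▸ h.payoff_nonneg i)
  · exact le_sup_of_le_left (h.unsold j (not_exists.1 hsold)).le

lemma isAuctionState_award (h : IsAuctionState_s6 M r δ q ν) (hδ : 0 ≤ δ) {i : I} {k : J}
    (hi : ν i = none) (hpos : 0 ≤ M.u i k (q k + δ))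
    (hbest : ∀ l, M.u i l (q l + δ) ≤ M.u i k (q k + δ)) :
    IsAuctionState_s6 M r δ (Function.update q k (q k + δ)) (award ν i k) := by
  set q' := Function.update q k (q k + δ) with hq'
  have hle : q ≤ q' := le_update_self_iff.2 (le_add_of_nonneg_right hδ)
  have hbid : payoff M q' (award ν i k) i = M.u i k (q k + δ) := by
    rw [payoff_of_eq_some (award_self ν i k), hq', Function.update_self]
  have hkeep : ∀ i' j, j ≠ k → ν i' = some j → award ν i k i' = some j →
      payoff M q' (award ν i k) i' = payoff M q ν i' := fun i' j hj hν hν' => by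
    rw [payoff_of_eq_some hν', payoff_of_eq_some hν, hq', Function.update_of_ne hj]
  refine ⟨⟨isMatching_award h.matching i k, h.reserve_le.trans hle, fun j hj => ?_, fun i' => ?_⟩,
    fun i' hi' l => ?_⟩
  · have hjk : j ≠ k := fun hjk => hj i (hjk ▸ award_self ν i k)
    rw [hq', Function.update_of_ne hjk]
    refine h.unsold j fun i' hi' => hj i' (award_of_ne ?_ hjk hi')
    rintro rfl
    simp [hi] at hi'
  · cases hν' : award ν i k i' with
    | none => exact (payoff_of_eq_none hν').ge
    | some j =>
      rcases award_eq_some hν' with ⟨rfl, rfl⟩ | ⟨-, hj, hν⟩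
      · exact hbid ▸ hpos
      · exact hkeep i' j hj hν hν' ▸ h.payoff_nonneg i'
  · obtain ⟨j, hν'⟩ := Option.ne_none_iff_exists'.1 hi'
    have hmono : M.u i' l (q' l + δ) ≤ M.u i' l (q l + δ) :=
      (M.anti i' l).antitone (add_le_add_left (hle l) δ)
    refine hmono.trans ?_
    rcases award_eq_some hν' with ⟨rfl, rfl⟩ | ⟨-, hj, hν⟩
    · exact hbid ▸ hbest l
    · exact hkeep i' j hj hν hν' ▸ h.le_payoff i' (by simp [hν]) l

lemma IsAuctionState_s6.exists_bid (h : IsAuctionState_s6 M r δ q ν) (hδ : 0 ≤ δ)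
    (hν : ¬ IsApproxEquilib M r δ q ν) :
    ∃ k ν', IsAuctionState_s6 M r δ (Function.update q k (q k + δ)) ν' := by
  obtain ⟨i, l, hl⟩ : ∃ i l, payoff M q ν i < M.u i l (q l + δ) := by
    by_contra! hc
    exact hν ⟨h.toIsAllocation, hc⟩
  have hi : ν i = none := by
    by_contra hi
    exact hl.not_ge (h.le_payoff i hi l)
  have : Nonempty J := ⟨l⟩
  obtain ⟨k, hk⟩ := Finite.exists_max fun l => M.u i l (q l + δ)
  rw [payoff_of_eq_none hi] at hl
  exact ⟨k, award ν i k, isAuctionState_award h hδ hi (hl.le.trans (hk l)) hk⟩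

lemma exists_isApproxEquilib (M : Market I J) (r : J → ℝ) (hδ : 0 < δ) :
    ∃ q ν, IsApproxEquilib M r δ q ν := by
  by_contra! hc
  have hstate : ∀ n : ℕ, ∃ q ν, IsAuctionState_s6 M r δ q ν ∧ ∑ j, q j = ∑ j, r j + n * δ := by
    intro n
    induction n with
    | zero =>
      refine ⟨r, fun _ => none, ⟨⟨?_, le_rfl, fun _ _ => rfl, ?_⟩, fun _ h => absurd rfl h⟩, ?_⟩
      · exact fun _ _ _ h => absurd h (Option.some_ne_none _).symm
      · exact fun _ => (payoff_of_eq_none rfl).ge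
      · simp
    | succ n ih =>
      obtain ⟨q, ν, h, hsum⟩ := ih
      obtain ⟨k, ν', h'⟩ := h.exists_bid hδ.le (hc q ν)
      refine ⟨_, ν', h', ?_⟩
      rw [Finset.sum_update_of_mem (Finset.mem_univ k), add_right_comm,
        Finset.sdiff_singleton_eq_erase, Finset.add_sum_erase _ _ (Finset.mem_univ k), hsum]
      push_cast
      ring
  obtain ⟨B, hB⟩ := exists_price_bound M
  obtain ⟨n, hn⟩ := exists_nat_gt ((∑ j, (r ⊔ B) j - ∑ j, r j) / δ)
  obtain ⟨q, ν, h, hsum⟩ := hstate n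
  have hle : ∑ j, q j ≤ ∑ j, (r ⊔ B) j := Finset.sum_le_sum fun j _ => hB r q ν h.toIsAllocation j
  rw [div_lt_iff₀ hδ] at hn
  linarith

section Limits

variable {α : Type*} {l : Filter α} [l.NeBot] {ra qa : α → J → ℝ} {δa : α → ℝ}

lemma IsApproxEquilib.of_tendsto (hr : Tendsto ra l (𝓝 r)) (hδ : Tendsto δa l (𝓝 δ))
    (hq : Tendsto qa l (𝓝 q)) (h : ∀ᶠ a in l, IsApproxEquilib M (ra a) (δa a) (qa a) ν) :
    IsApproxEquilib M r δ q ν := by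
  have hpayoff : ∀ i, Tendsto (fun a => payoff M (qa a) ν i) l (𝓝 (payoff M q ν i)) :=
    fun i => ((continuous_payoff M ν i).tendsto q).comp hq
  obtain ⟨a₀, h₀⟩ := h.exists
  refine ⟨⟨h₀.matching, le_of_tendsto_of_tendsto hr hq (h.mono fun a ha => ha.reserve_le),
    fun j hj => ?_, fun i => ?_⟩, fun i k => ?_⟩
  · exact tendsto_nhds_unique_of_eventuallyEq (hq.apply_nhds j) (hr.apply_nhds j)
      (h.mono fun a ha => ha.unsold j hj)
  · exact ge_of_tendsto (hpayoff i) (h.mono fun a ha => ha.payoff_nonneg i)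
  · exact le_of_tendsto_of_tendsto (((M.cont i k).tendsto _).comp ((hq.apply_nhds k).add hδ))
      (hpayoff i) (h.mono fun a ha => ha.le_payoff i k)

lemma exists_limit_isApproxEquilib {νa : α → I → Option J} (hr : Tendsto ra l (𝓝 r))
    (hδ : Tendsto δa l (𝓝 δ)) (h : ∀ᶠ a in l, IsApproxEquilib M (ra a) (δa a) (qa a) (νa a)) :
    ∃ q ν, (∃ᶠ a in l, νa a = ν) ∧ IsApproxEquilib M r δ q ν := by
  let U := Ultrafilter.of l
  have hU : (U : Filter α) ≤ l := Ultrafilter.of_le l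
  obtain ⟨ν, hν⟩ := (U.map νa).eq_pure_of_finite
  have hνU : ∀ᶠ a in (U : Filter α), νa a = ν := by
    have hmem : {ν} ∈ U.map νa := hν ▸ Ultrafilter.mem_pure.2 rfl
    exact hmem
  obtain ⟨B, hB⟩ := exists_price_bound M
  have hbdd : ∀ᶠ a in (U : Filter α), qa a ∈ Set.Icc (r - 1) ((r + 1) ⊔ B) := by
    have hnhds : Set.Icc (r - 1) (r + 1) ∈ 𝓝 r :=
      pi_Icc_mem_nhds (fun j => sub_one_lt (r j)) fun j => lt_add_one (r j)
    filter_upwards [hU h, hU (hr hnhds)] with a ha hra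
    exact ⟨hra.1.trans ha.reserve_le,
      (hB _ _ _ ha.toIsAllocation).trans (sup_le_sup_right hra.2 B)⟩
  obtain ⟨q, -, hq⟩ := isCompact_Icc.ultrafilter_le_nhds' (U.map qa) hbdd
  refine ⟨q, ν, hνU.frequently.filter_mono hU,
    .of_tendsto (hr.mono_left hU) (hδ.mono_left hU) hq ?_⟩
  filter_upwards [hU h, hνU] with a ha hνa
  exact hνa ▸ ha

end Limits

lemma exists_isReserveEquilib (M : Market I J) (r : J → ℝ) : ∃ q ν, IsReserveEquilib M r q ν := by
  choose! q ν h using fun δ (hδ : 0 < δ) => exists_isApproxEquilib M r hδ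
  obtain ⟨q₀, ν₀, -, h₀⟩ := exists_limit_isApproxEquilib (l := 𝓝[>] (0 : ℝ)) tendsto_const_nhds
    (tendsto_id.mono_left nhdsWithin_le_nhds) (eventually_mem_nhdsWithin.mono h)
  exact ⟨q₀, ν₀, h₀⟩

/-! ### Comparing equilibria -/

lemma IsApproxEquilib.of_reserve_le (h : IsApproxEquilib M r' δ q ν) (hr : r ≤ r')
    (hunsold : ∀ j, (∀ i, ν i ≠ some j) → r' j = r j) : IsApproxEquilib M r δ q ν :=
  { h with
    reserve_le := hr.trans h.reserve_le
    unsold := fun j hj => (h.unsold j hj).trans (hunsold j hj) }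

lemma IsReserveEquilib.u_le_payoff (h : IsReserveEquilib M r q ν) (i : I) (k : J) :
    M.u i k (q k) ≤ payoff M q ν i := by
  simpa only [add_zero] using h.le_payoff i k

lemma IsReserveEquilib.payoff_le (h : IsReserveEquilib M r q ν) (μ : I → Option J) (i : I) :
    payoff M q μ i ≤ payoff M q ν i := by
  cases hi : μ i with
  | none => exact payoff_of_eq_none (M := M) hi ▸ h.payoff_nonneg i
  | some j => exact payoff_of_eq_some (M := M) hi ▸ h.u_le_payoff i j

lemma IsReserveEquilib.payoff_eq (hμ : IsReserveEquilib M r p μ) (hν : IsReserveEquilib M r' p ν) :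
    payoff M p μ = payoff M p ν :=
  funext fun i => (hν.payoff_le μ i).antisymm (hμ.payoff_le ν i)

/-- The goods whose price rises from `p` to `q`. -/
noncomputable def raisedGoods (p q : J → ℝ) : Finset J :=
  Finset.univ.filter fun j => p j < q j

/-- The buyers whose payoff falls in passing from prices `p` and assignment `μ` to `q` and `ν`. -/
noncomputable def losers (M : Market I J) (p : J → ℝ) (μ : I → Option J) (q : J → ℝ)
    (ν : I → Option J) : Finset I :=
  Finset.univ.filter fun i => payoff M q ν i < payoff M p μ i

lemma mem_raisedGoods {j : J} : j ∈ raisedGoods p q ↔ p j < q j := by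
  simp [raisedGoods]

lemma eq_of_notMem_raisedGoods (h : p ≤ q) {j : J} (hj : j ∉ raisedGoods p q) : q j = p j :=
  (not_lt.1 (mt mem_raisedGoods.2 hj)).antisymm (h j)

lemma mem_losers {i : I} : i ∈ losers M p μ q ν ↔ payoff M q ν i < payoff M p μ i := by
  simp [losers]

lemma IsReserveEquilib.demandSet_losers_subset (hq : IsReserveEquilib M r q ν) :
    demandSet M p (payoff M p μ) (losers M p μ q ν) ⊆ raisedGoods p q := by
  intro j hj
  obtain ⟨i, hi, hij⟩ := mem_demandSet.1 hj
  have hlt : M.u i j (q j) < M.u i j (p j) :=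
    (hq.u_le_payoff i j).trans_lt (hij ▸ mem_losers.1 hi)
  exact mem_raisedGoods.2 ((M.anti i j).lt_iff_gt.1 hlt)

lemma IsReserveEquilib.payoff_pos_of_mem_losers (hq : IsReserveEquilib M r q ν) {i : I}
    (hi : i ∈ losers M p μ q ν) : 0 < payoff M p μ i :=
  (hq.payoff_nonneg i).trans_lt (mem_losers.1 hi)

lemma IsReserveEquilib.raisedGoods_subset_image_losers (hp : IsReserveEquilib M r p μ)
    (hq : IsReserveEquilib M r' q ν) (hr : r' ≤ p) :
    (raisedGoods p q).image some ⊆ (losers M p μ q ν).image ν := by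
  refine Finset.image_subset_iff.2 fun j hj => ?_
  rw [mem_raisedGoods] at hj
  obtain ⟨i, hi⟩ : ∃ i, ν i = some j := by
    by_contra! hunsold
    exact hj.not_ge ((hq.unsold j hunsold).trans_le (hr j))
  have hlt : payoff M q ν i < payoff M p μ i := by
    calc payoff M q ν i = M.u i j (q j) := payoff_of_eq_some hi
      _ < M.u i j (p j) := M.anti i j hj
      _ ≤ payoff M p μ i := hp.u_le_payoff i j
  exact Finset.mem_image.2 ⟨i, mem_losers.2 hlt, hi⟩

lemma IsReserveEquilib.image_losers_eq (hp : IsReserveEquilib M r p μ)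
    (hq : IsReserveEquilib M r' q ν) (hr : r' ≤ p) :
    (losers M p μ q ν).image μ = (raisedGoods p q).image some ∧
      (losers M p μ q ν).image ν = (raisedGoods p q).image some := by
  have hν := hp.raisedGoods_subset_image_losers hq hr
  have hμ : (losers M p μ q ν).image μ = (raisedGoods p q).image some :=
    hp.matching.image_eq_of_card_le
      ((image_subset_demandSet fun i hi => hq.payoff_pos_of_mem_losers hi).trans
        (Finset.image_subset_image hq.demandSet_losers_subset))
      (card_le_card_of_image_some_subset hν)
  refine ⟨hμ, (Finset.eq_of_subset_of_card_le hν ?_).symm⟩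
  calc ((losers M p μ q ν).image ν).card ≤ (losers M p μ q ν).card := Finset.card_image_le
    _ = ((losers M p μ q ν).image μ).card := (hp.matching.card_image hμ.subset).symm
    _ = ((raisedGoods p q).image some).card := by rw [hμ]

lemma IsReserveEquilib.notMem_raisedGoods (hp : IsReserveEquilib M r p μ)
    (hq : IsReserveEquilib M r' q ν) (hr : r' ≤ p) {i : I} (hi : i ∉ losers M p μ q ν) {j : J}
    (hij : μ i = some j) : j ∉ raisedGoods p q := by
  intro hj
  obtain ⟨i', hi', hij'⟩ := Finset.mem_image.1
    ((hp.image_losers_eq hq hr).1 ▸ Finset.mem_image_of_mem some hj)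
  exact hi (hp.matching i i' j hij hij' ▸ hi')

lemma IsReserveEquilib.payoff_piecewise_losers (hp : IsReserveEquilib M r p μ)
    (hq : IsReserveEquilib M p q ν) (i : I) :
    payoff M q ((losers M p μ q ν).piecewise ν μ) i = min (payoff M p μ i) (payoff M q ν i) := by
  by_cases hi : i ∈ losers M p μ q ν
  · rw [min_eq_right (mem_losers.1 hi).le, payoff, payoff, Finset.piecewise_eq_of_mem _ _ _ hi]
  · rw [min_eq_left (not_lt.1 (mt mem_losers.2 hi)), payoff,
      Finset.piecewise_eq_of_notMem _ _ _ hi]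
    cases hμi : μ i with
    | none => exact (payoff_of_eq_none hμi).symm
    | some j =>
      have hj : j ∉ raisedGoods p q := hp.notMem_raisedGoods hq le_rfl hi hμi
      rw [payoff_of_eq_some hμi, Option.elim_some, eq_of_notMem_raisedGoods hq.reserve_le hj]

theorem IsReserveEquilib.trans (hp : IsReserveEquilib M r p μ) (hq : IsReserveEquilib M p q ν) :
    ∃ κ, IsReserveEquilib M r q κ := by
  obtain ⟨hμ, hν⟩ := hp.image_losers_eq hq le_rfl
  have hpayoff := hp.payoff_piecewise_losers hq
  have hstay : ∀ i ∉ losers M p μ q ν, ∀ j, μ i = some j → j ∉ raisedGoods p q :=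
    fun i hi j => hp.notMem_raisedGoods hq le_rfl hi
  set L := losers M p μ q ν
  have hswap : ∀ κ : I → Option J, L.image κ = (raisedGoods p q).image some →
      ∀ i ∈ L, ∀ j, κ i = some j → j ∈ raisedGoods p q := fun κ hκ i hi j hij => by
    have hmem : κ i ∈ (raisedGoods p q).image some := hκ ▸ Finset.mem_image_of_mem κ hi
    simpa [hij] using hmem
  refine ⟨L.piecewise ν μ, ⟨?_, hp.reserve_le.trans hq.reserve_le, fun j hj => ?_, fun i => ?_⟩,
    fun i k => ?_⟩
  · intro i i' j hi hi'
    have := hp.matching i i' j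
    have := hq.matching i i' j
    have := hswap ν hν
    grind [Finset.piecewise]
  · have hj' : j ∉ raisedGoods p q := fun hjr => by
      obtain ⟨i, hi, hij⟩ := Finset.mem_image.1 (hν ▸ Finset.mem_image_of_mem some hjr)
      exact hj i ((L.piecewise_eq_of_mem _ _ hi).trans hij)
    rw [eq_of_notMem_raisedGoods hq.reserve_le hj']
    refine hp.unsold j fun i hij => ?_
    by_cases hi : i ∈ L
    · exact hj' (hswap μ hμ i hi j hij)
    · exact hj i ((L.piecewise_eq_of_notMem _ _ hi).trans hij)
  · exact hpayoff i ▸ le_min (hp.payoff_nonneg i) (hq.payoff_nonneg i)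
  · rw [hpayoff, add_zero]
    exact le_min (((M.anti i k).antitone (hq.reserve_le k)).trans (hp.u_le_payoff i k))
      (hq.u_le_payoff i k)

/-! ### Tightness -/

lemma IsReserveEquilib.le_of_lt_card_demandSet (hp : IsReserveEquilib M r p μ)
    (hq : IsReserveEquilib M r q ν)
    (htight : ∀ S : Finset I, S.Nonempty → (∀ i ∈ S, 0 < payoff M p μ i) →
      S.card < (demandSet M p (payoff M p μ) S).card) : q ≤ p := by
  by_contra hqp
  obtain ⟨j, hj⟩ : ∃ j, p j < q j := by simpa [Pi.le_def] using hqp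
  have hraised := hp.raisedGoods_subset_image_losers hq hp.reserve_le
  have hne : (losers M p μ q ν).Nonempty := Finset.image_nonempty.1
    ⟨some j, hraised (Finset.mem_image_of_mem some (mem_raisedGoods.2 hj))⟩
  refine (htight _ hne fun i hi => hq.payoff_pos_of_mem_losers hi).not_ge ?_
  exact (Finset.card_le_card hq.demandSet_losers_subset).trans
    (card_le_card_of_image_some_subset hraised)

lemma IsReserveEquilib.image_eq_demandSet (hp : IsReserveEquilib M r p μ)
    (hν : IsReserveEquilib M r' p ν) (hpos : ∀ i ∈ S, 0 < payoff M p μ i)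
    (hcard : (demandSet M p (payoff M p μ) S).card ≤ S.card) :
    S.image ν = (demandSet M p (payoff M p μ) S).image some := by
  rw [hp.payoff_eq hν] at hpos hcard ⊢
  exact hν.matching.image_eq_of_card_le (image_subset_demandSet hpos) hcard

lemma IsReserveEquilib.exists_not_le_of_card_demandSet_le (hp : IsReserveEquilib M r p μ)
    (hne : S.Nonempty) (hpos : ∀ i ∈ S, 0 < payoff M p μ i)
    (hcard : (demandSet M p (payoff M p μ) S).card ≤ S.card) :
    ∃ q ν, IsReserveEquilib M r q ν ∧ ¬ q ≤ p := by
  by_contra! hmax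
  set D := demandSet M p (payoff M p μ) S
  let b (ε : ℝ) : J → ℝ := p + ε • Set.indicator D 1
  have hb : Tendsto b (𝓝[>] 0) (𝓝 p) :=
    (Continuous.tendsto' (by fun_prop) 0 p (by simp [b])).mono_left nhdsWithin_le_nhds
  choose q ν hq using fun ε => exists_isReserveEquilib M (b ε)
  obtain ⟨q₀, ν₀, hν, h₀⟩ := exists_limit_isApproxEquilib hb tendsto_const_nhds (.of_forall hq)
  obtain ⟨κ, hκ⟩ := hp.trans h₀
  obtain rfl : q₀ = p := (hmax q₀ κ hκ).antisymm h₀.reserve_le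
  have hsold : S.image ν₀ = D.image some := hp.image_eq_demandSet h₀ hpos hcard
  obtain ⟨ε, rfl, hε : 0 < ε⟩ := (hν.and_eventually eventually_mem_nhdsWithin).exists
  have hle : q₀ ≤ b ε :=
    le_add_of_nonneg_right (smul_nonneg hε.le (Set.indicator_nonneg fun _ _ => zero_le_one))
  have hqε : IsReserveEquilib M q₀ (q ε) (ν ε) := (hq ε).of_reserve_le hle fun j hj => by
    have hjD : j ∉ D := fun hjD => by
      obtain ⟨i, -, hij⟩ := Finset.mem_image.1 (hsold ▸ Finset.mem_image_of_mem some hjD)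
      exact hj i hij
    simp [b, hjD]
  obtain ⟨κ', hκ'⟩ := hp.trans hqε
  obtain ⟨j, hj⟩ : D.Nonempty := Finset.image_nonempty.1 (hsold ▸ hne.image (ν ε))
  have hlt : q₀ j < b ε j := by simp [b, hj, hε]
  exact (hlt.trans_le ((hq ε).reserve_le j)).not_ge (hmax (q ε) κ' hκ' j)

theorem tightness_highest_general (M : Market I J) (hp : IsReserveEquilib M r p μ) :
    (∀ q ν, IsReserveEquilib M r q ν → q ≤ p) ↔
      ∀ S : Finset I, S.Nonempty → (∀ i ∈ S, 0 < payoff M p μ i) →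
        S.card < (demandSet M p (payoff M p μ) S).card := by
  refine ⟨fun hmax S hne hpos => ?_, fun htight q ν hq => hp.le_of_lt_card_demandSet hq htight⟩
  by_contra! hcard
  obtain ⟨q, ν, hq, hqp⟩ := hp.exists_not_le_of_card_demandSet_le hne hpos hcard
  exact hqp (hmax q ν hq)

lemma isEquilib_iff {w : I → ℝ} :
    IsEquilib M p w μ ↔ IsReserveEquilib M 0 p μ ∧ w = payoff M p μ := by
  constructor
  · rintro ⟨hinj, hp, hw, hsome, hle, hnone, hunsold⟩
    obtain rfl : w = payoff M p μ := funext fun i => by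
      cases hi : μ i with
      | none => rw [hnone i hi, payoff_of_eq_none hi]
      | some j => rw [hsome i j hi, payoff_of_eq_some hi]
    exact ⟨⟨⟨hinj, hp, hunsold, hw⟩, fun i k => by simpa only [add_zero] using hle i k⟩, rfl⟩
  · rintro ⟨h, rfl⟩
    exact ⟨h.matching, h.reserve_le, h.payoff_nonneg, fun i j => payoff_of_eq_some,
      h.u_le_payoff, fun i => payoff_of_eq_none, h.unsold⟩

lemma IsReserveEquilib.isHighest_iff (h : IsReserveEquilib M 0 p μ) :
    IsHighest M p (payoff M p μ) μ ↔ ∀ q ν, IsReserveEquilib M 0 q ν → q ≤ p := by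
  constructor
  · exact fun hmax q ν hq => hmax.2 q _ ν (isEquilib_iff.2 ⟨hq, rfl⟩)
  · exact fun hmax => ⟨isEquilib_iff.2 ⟨h, rfl⟩, fun q _ ν hq => hmax q ν (isEquilib_iff.1 hq).1⟩

end Development

/-- Tightness (highest equilibrium): a competitive equilibrium `W` is the
highest one iff for every nonempty set `S` of buyers with strictly positive
payoffs, the buyers in `S` demand at least `|S| + 1` goods. -/
theorem tightness_highest {I J : Type} [Fintype I] [Fintype J] (M : Market I J)
    (p : J → ℝ) (w : I → ℝ) (μ : I → Option J) (h : IsEquilib M p w μ) :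
    IsHighest M p w μ ↔
      ∀ S : Finset I, S.Nonempty → (∀ i ∈ S, 0 < w i) →
        S.card + 1 ≤ (Finset.univ.filter fun j : J =>
          ∃ i ∈ S, M.u i j (p j) = w i).card := by
  obtain ⟨hp, rfl⟩ := isEquilib_iff.1 h
  exact hp.isHighest_iff.trans (tightness_highest_general M hp)
end

section
/- (Critical Alternating Path, highest equilibrium) Let W be the highest competitive equilibrium of a unit-demand market with supporting matching μ. Then for every good j there exists a tight alternating path (alternating between matching edges of μ and non-matching tight edges, starting at j with a matching edge or of length 0) ending either at a buyer with payoff 0 or at an unmatched good. -/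
attribute [local instance] Classical.propDecidable

/-!
Call a good reachable if a tight alternating path leads to it from `j`. If no such path ended at an
unmatched good or at a buyer with payoff `0`, the reachable goods would be matched to buyers with
positive payoffs whose tight goods are all reachable. Each of these buyers `i` then has an outside
option `c i < w i` that bounds `0` and the payoffs from the other goods.

Let the reachable goods bid for these buyers, in an auction in which the payoffs of the buyers
ascend from `c`. Somebody is left at payoff exactly `c i < w i`, and therefore faces prices above
`p`. Where the prices of this auction exceed `p`, they and the new partners replace the old ones.
This is an equilibrium with a price above the highest one, a contradiction. Continuous prices are
reached as a limit of auctions with bid increments `δ → 0`.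
-/

open Filter Topology

section Auction

variable {ι α : Type*} [Preorder α] {F : ι → ι → ℕ → α} {n : ι → ℕ} {ν : ι → Option ι}

/-- A state of an ascending multi-item auction in which `F a b k` is the payoff of bidder `a` from
object `b` at price level `k`. Object `b` stands at level `n b` and is held by `ν b`, if anybody;
no holder would gain from any object at a price one level up. -/
structure IsAuctionState_s7 (F : ι → ι → ℕ → α) (n : ι → ℕ) (ν : ι → Option ι) : Prop where
  holder_inj : ∀ ⦃a b b'⦄, ν b = some a → ν b' = some a → b = b'
  level_eq_zero : ∀ ⦃b⦄, ν b = none → n b = 0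
  le_holder : ∀ ⦃a b⦄, ν b = some a → ∀ b', F a b' (n b' + 1) ≤ F a b (n b)

theorem isAuctionState_zero_none (F : ι → ι → ℕ → α) :
    IsAuctionState_s7 F (fun _ => 0) fun _ => none where
  holder_inj := by simp
  level_eq_zero := by simp
  le_holder := by simp

theorem IsAuctionState_s7.bid [DecidableEq ι] (hF : ∀ a b, Antitone (F a b))
    (h : IsAuctionState_s7 F n ν) {a g : ι} (ha : ∀ b, ν b ≠ some a)
    (hg : ∀ b, F a b (n b + 1) ≤ F a g (n g + 1)) :
    IsAuctionState_s7 F (Function.update n g (n g + 1)) (Function.update ν g (some a)) where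
  holder_inj c b b' hb hb' := by
    have := @h.holder_inj c b b'
    grind [Function.update_apply]
  level_eq_zero b hb := by
    have := @h.level_eq_zero b
    grind [Function.update_apply]
  le_holder c b hb b' := by
    have hraise : F c b' (Function.update n g (n g + 1) b' + 1) ≤ F c b' (n b' + 1) :=
      hF c b' (by grind [Function.update_apply])
    refine hraise.trans ?_
    by_cases hbg : b = g
    · subst hbg
      obtain rfl : a = c := by simpa using hb
      simpa using hg b'
    · simp only [Function.update_of_ne hbg] at hb ⊢
      exact h.le_holder hb b'

variable [Finite ι]

theorem exists_forall_ne_some_of_eq_none {b₀ : ι} (hb₀ : ν b₀ = none) :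
    ∃ a, ∀ b, ν b ≠ some a := by
  by_contra! hheld
  choose b hb using hheld
  have hinj : Function.Injective b := fun a a' haa' =>
    Option.some.inj ((hb a).symm.trans (haa' ▸ hb a'))
  obtain ⟨a, rfl⟩ := Finite.injective_iff_surjective.1 hinj b₀
  simp [hb a] at hb₀

theorem IsAuctionState_s7.exists_perm (h : IsAuctionState_s7 F n ν) (hν : ∀ b, ν b ≠ none) :
    ∃ σ : Equiv.Perm ι, ∀ a, ν (σ a) = some a := by
  choose τ hτ using fun b => Option.ne_none_iff_exists'.1 (hν b)
  have hinj : Function.Injective τ := fun b b' hbb' => h.holder_inj (hτ b) (hbb' ▸ hτ b')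
  let e := Equiv.ofBijective τ (Finite.injective_iff_bijective.1 hinj)
  exact ⟨e.symm, fun a => (hτ _).trans (congrArg some (e.apply_symm_apply a))⟩

theorem IsAuctionState_s7.exists_level_bound (hF : ∀ a b, Antitone (F a b))
    (hbot : ∀ a b y, ∀ᶠ k in atTop, F a b k < y) :
    ∃ N, ∀ n ν, IsAuctionState_s7 F n ν → (∃ b, ν b = none) → ∀ b, n b ≤ N := by
  obtain ⟨N, hN⟩ := (eventually_all.2 fun a => eventually_all.2 fun b => eventually_all.2 fun b' =>
    hbot a b (F a b' 1)).exists
  -- A holder at a level above `N` would rather take the object `b₀`, still at its lowest level.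
  refine ⟨N, fun n ν h ⟨b₀, hb₀⟩ b => ?_⟩
  rcases hb : ν b with _ | a
  · simp [h.level_eq_zero hb]
  · by_contra! hlt
    have hle : F a b₀ 1 ≤ F a b (n b) := by
      simpa [h.level_eq_zero hb₀] using h.le_holder hb b₀
    exact ((hle.trans (hF a b hlt.le)).trans_lt (hN a b b₀)).false

theorem IsAuctionState_s7.exists_maximal_level_sum [Fintype ι] [Nonempty ι]
    (hF : ∀ a b, Antitone (F a b)) (hbot : ∀ a b y, ∀ᶠ k in atTop, F a b k < y) :
    ∃ n ν, IsAuctionState_s7 F n ν ∧ (∃ b, ν b = none) ∧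
      ∀ n' ν', IsAuctionState_s7 F n' ν' → (∃ b, ν' b = none) → ∑ b, n' b ≤ ∑ b, n b := by
  let sums : Set ℕ := {s | ∃ n ν, IsAuctionState_s7 F n ν ∧ (∃ b, ν b = none) ∧ ∑ b, n b = s}
  have hne : sums.Nonempty := ⟨_, _, _, isAuctionState_zero_none F, by simp, rfl⟩
  have hbdd : BddAbove sums := by
    obtain ⟨N, hN⟩ := exists_level_bound hF hbot
    refine ⟨∑ _ : ι, N, ?_⟩
    rintro _ ⟨n, ν, h, hfree, rfl⟩
    exact Finset.sum_le_sum fun b _ => hN n ν h hfree b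
  obtain ⟨n, ν, h, hfree, hsum⟩ := Nat.sSup_mem hne hbdd
  exact ⟨n, ν, h, hfree, fun n' ν' h' hfree' => hsum ▸ le_csSup hbdd ⟨n', ν', h', hfree', rfl⟩⟩

end Auction

theorem exists_perm_forall_succ_le {ι α : Type*} [LinearOrder α] [Finite ι] [Nonempty ι]
    {F : ι → ι → ℕ → α} (hF : ∀ a b, Antitone (F a b))
    (hbot : ∀ a b y, ∀ᶠ k in atTop, F a b k < y) :
    ∃ (n : ι → ℕ) (σ : Equiv.Perm ι),
      (∃ b, n b ≤ 1) ∧ ∀ a b, F a b (n b + 1) ≤ F a (σ a) (n (σ a)) := by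
  classical
  have := Fintype.ofFinite ι
  obtain ⟨n, ν, h, ⟨b₀, hb₀⟩, hmax⟩ := IsAuctionState_s7.exists_maximal_level_sum hF hbot
  -- By maximality, one more bid ends the auction, with the last object `b₀` at level at most one.
  obtain ⟨a, ha⟩ := exists_forall_ne_some_of_eq_none hb₀
  obtain ⟨g, hg⟩ := Finite.exists_max fun b => F a b (n b + 1)
  have hbid := h.bid hF ha hg
  have hsum : ∑ b, n b < ∑ b, Function.update n g (n g + 1) b :=
    Finset.sum_lt_sum (fun b _ => by grind [Function.update_apply]) ⟨g, Finset.mem_univ g, by simp⟩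
  have hheld : ∀ b, Function.update ν g (some a) b ≠ none := fun b hb =>
    (hmax _ _ hbid ⟨b, hb⟩).not_gt hsum
  obtain ⟨σ, hσ⟩ := hbid.exists_perm hheld
  refine ⟨_, σ, ⟨b₀, ?_⟩, fun c => hbid.le_holder (hσ c)⟩
  grind [Function.update_apply, h.level_eq_zero hb₀]

section EnvyFree

variable {ι : Type*} {f : ι → ι → ℝ → ℝ} {r : ι → ℝ}

/-- Prices `x` above the reserve prices `r` and an assignment `σ` of the objects to the bidders are
`δ`-approximately envy-free if no bidder prefers another object at a price raised by `δ`. Moreover,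
the price of some object is required to be within `δ` of its reserve price. -/
structure IsApproxEnvyFree (f : ι → ι → ℝ → ℝ) (r : ι → ℝ) (δ : ℝ) (x : ι → ℝ)
    (σ : Equiv.Perm ι) : Prop where
  reserve_le : ∀ b, r b ≤ x b
  exists_le_add : ∃ b, x b ≤ r b + δ
  le_own : ∀ a b, f a b (x b + δ) ≤ f a (σ a) (x (σ a))

variable [Finite ι]

theorem exists_isApproxEnvyFree [Nonempty ι] (hf : ∀ a b, Antitone (f a b))
    (hbot : ∀ a b, Tendsto (f a b) atTop atBot) (r : ι → ℝ) {δ : ℝ} (hδ : 0 < δ) :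
    ∃ x σ, IsApproxEnvyFree f r δ x σ := by
  have hprice : ∀ b, Tendsto (fun k : ℕ => r b + k * δ) atTop atTop := fun b =>
    tendsto_atTop_add_const_left _ _ (tendsto_natCast_atTop_atTop.atTop_mul_const hδ)
  have hmono : ∀ b, Monotone fun k : ℕ => r b + k * δ := fun b k l hkl => by
    dsimp only
    gcongr
  obtain ⟨n, σ, ⟨b₀, hb₀⟩, hle⟩ := exists_perm_forall_succ_le
    (F := fun a b k => f a b (r b + k * δ)) (fun a b => (hf a b).comp_monotone (hmono b))
    (fun a b y => ((hbot a b).comp (hprice b)).eventually_lt_atBot y)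
  refine ⟨fun b => r b + n b * δ, σ, fun b => ?_, ⟨b₀, ?_⟩, fun a b => ?_⟩
  · exact le_add_of_nonneg_right (by positivity)
  · have : (n b₀ : ℝ) ≤ 1 := mod_cast hb₀
    nlinarith
  · simpa [add_mul, add_assoc] using hle a b

theorem IsApproxEnvyFree.exists_price_bound (hf : ∀ a b, Antitone (f a b))
    (hbot : ∀ a b, Tendsto (f a b) atTop atBot) (r : ι → ℝ) :
    ∃ B, ∀ δ ≤ 1, ∀ x σ, IsApproxEnvyFree f r δ x σ → ∀ b, x b ≤ B := by
  obtain ⟨B, hB⟩ := (eventually_all.2 fun a => eventually_all.2 fun b => eventually_all.2 fun b' =>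
    (hbot a b).eventually_lt_atBot (f a b' (r b' + 2))).exists
  refine ⟨B, fun δ hδ x σ h b => ?_⟩
  obtain ⟨b₀, hb₀⟩ := h.exists_le_add
  obtain ⟨a, rfl⟩ := σ.surjective b
  by_contra! hlt
  have : f a b₀ (r b₀ + 2) < f a b₀ (r b₀ + 2) := calc
    f a b₀ (r b₀ + 2) ≤ f a b₀ (x b₀ + δ) := hf a b₀ (by linarith)
    _ ≤ f a (σ a) (x (σ a)) := h.le_own a b₀
    _ ≤ f a (σ a) B := hf a (σ a) hlt.le
    _ < f a b₀ (r b₀ + 2) := hB a (σ a) b₀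
  exact this.false

theorem isClosed_setOf_isApproxEnvyFree (hcont : ∀ a b, Continuous (f a b)) :
    IsClosed {z : ℝ × (ι → ℝ) | ∃ σ, IsApproxEnvyFree f r z.1 z.2 σ} := by
  have hiff : ∀ (z : ℝ × (ι → ℝ)) σ, IsApproxEnvyFree f r z.1 z.2 σ ↔ (∀ b, r b ≤ z.2 b) ∧
      (∃ b, z.2 b ≤ r b + z.1) ∧ ∀ a b, f a b (z.2 b + z.1) ≤ f a (σ a) (z.2 (σ a)) :=
    fun _ _ => ⟨fun ⟨h₁, h₂, h₃⟩ => ⟨h₁, h₂, h₃⟩, fun ⟨h₁, h₂, h₃⟩ => ⟨h₁, h₂, h₃⟩⟩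
  simp only [hiff, Set.ofPred_exists, Set.ofPred_and, Set.ofPred_forall]
  refine isClosed_iUnion_of_finite fun σ => .inter ?_ (.inter ?_ ?_)
  · exact isClosed_iInter fun b => isClosed_le (by fun_prop) (by fun_prop)
  · exact isClosed_iUnion_of_finite fun b => isClosed_le (by fun_prop) (by fun_prop)
  · exact isClosed_iInter fun a => isClosed_iInter fun b =>
      isClosed_le (by fun_prop) (by fun_prop)

theorem exists_isApproxEnvyFree_zero [Nonempty ι] (hf : ∀ a b, Antitone (f a b))
    (hcont : ∀ a b, Continuous (f a b)) (hbot : ∀ a b, Tendsto (f a b) atTop atBot) (r : ι → ℝ) :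
    ∃ x σ, IsApproxEnvyFree f r 0 x σ := by
  obtain ⟨B, hB⟩ := IsApproxEnvyFree.exists_price_bound hf hbot r
  let K : Set (ℝ × (ι → ℝ)) := Set.Icc 0 1 ×ˢ Set.Icc r fun _ => B
  have hcompact : IsCompact (K ∩ {z | ∃ σ, IsApproxEnvyFree f r z.1 z.2 σ}) :=
    (isCompact_Icc.prod isCompact_Icc).inter_right (isClosed_setOf_isApproxEnvyFree hcont)
  have hpos : Set.Ioc 0 1 ⊆ Prod.fst '' (K ∩ {z | ∃ σ, IsApproxEnvyFree f r z.1 z.2 σ}) := by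
    intro δ hδ
    obtain ⟨x, σ, h⟩ := exists_isApproxEnvyFree hf hbot r hδ.1
    exact ⟨(δ, x), ⟨⟨⟨hδ.1.le, hδ.2⟩, h.reserve_le, hB δ hδ.2 x σ h⟩, σ, h⟩, rfl⟩
  have hzero : (0 : ℝ) ∈ closure (Set.Ioc 0 1) := by simp [closure_Ioc]
  obtain ⟨⟨_, x⟩, ⟨-, σ, h⟩, rfl⟩ :=
    closure_minimal hpos (hcompact.image continuous_fst).isClosed hzero
  exact ⟨x, σ, h⟩

end EnvyFree

section SquareMarket

theorem exists_antitone_rightInverse_of_strictAnti {f : ℝ → ℝ} (hf : StrictAnti f)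
    (hsurj : Function.Surjective f) :
    ∃ g, Antitone g ∧ Continuous g ∧ Tendsto g atTop atBot ∧ Function.RightInverse g f := by
  let e : ℝ ≃o ℝᵒᵈ := hf.dual_right.orderIsoOfSurjective _ hsurj
  exact ⟨fun y => e.symm (OrderDual.toDual y), fun _ _ hxy => e.symm.monotone hxy,
    e.symm.continuous.comp continuous_toDual, e.symm.tendsto_atBot, e.apply_symm_apply⟩

variable {ι : Type*} [Finite ι] {u : ι → ι → ℝ → ℝ}

-- The goods act as bidders for the buyers here, and the payoffs of the buyers, ascending from their
-- outside options `c`, are the prices.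
theorem exists_competitive_assignment [Nonempty ι] (anti : ∀ i g, StrictAnti (u i g))
    (surj : ∀ i g, Function.Surjective (u i g)) (c : ι → ℝ) :
    ∃ (q : ι → ℝ) (σ : Equiv.Perm ι), (∀ i g, u i g (q g) ≤ u i (σ i) (q (σ i))) ∧
      (∀ i, c i ≤ u i (σ i) (q (σ i))) ∧ ∃ i, u i (σ i) (q (σ i)) = c i := by
  choose price hprice hcont hbot hu using fun g i =>
    exists_antitone_rightInverse_of_strictAnti (anti i g) (surj i g)
  obtain ⟨v, τ, hcv, ⟨i₀, hi₀⟩, hτ⟩ := exists_isApproxEnvyFree_zero hprice hcont hbot c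
  simp only [add_zero] at hi₀ hτ
  have hpayoff : ∀ i, u i (τ.symm i) (price (τ.symm i) i (v i)) = v i := fun i => hu _ _ _
  refine ⟨fun g => price g (τ g) (v (τ g)), τ.symm, fun i g => ?_, fun i => ?_, i₀, ?_⟩
  · simp only [Equiv.apply_symm_apply, hpayoff]
    exact ((anti i g).antitone (hτ g i)).trans_eq (hu g i (v i))
  · simpa only [Equiv.apply_symm_apply, hpayoff] using hcv i
  · simpa only [Equiv.apply_symm_apply, hpayoff] using hi₀.antisymm (hcv i₀)

theorem exists_raised_prices [Nonempty ι] (anti : ∀ i g, StrictAnti (u i g))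
    (surj : ∀ i g, Function.Surjective (u i g)) {c p : ι → ℝ}
    (hp : ∀ i g, u i g (p g) ≤ u i i (p i)) (hc : ∀ i, c i < u i i (p i)) :
    ∃ (q : ι → ℝ) (π : Equiv.Perm ι), (∀ g, p g ≤ q g) ∧ (∃ g, p g < q g) ∧
      (∀ i g, u i g (q g) ≤ u i (π i) (q (π i))) ∧ ∀ i, c i ≤ u i (π i) (q (π i)) := by
  classical
  obtain ⟨q, σ, hq, hcq, i₀, hi₀⟩ := exists_competitive_assignment anti surj c
  have hi₀q : p i₀ < q i₀ :=
    (anti i₀ i₀).lt_iff_gt.1 ((hq i₀ i₀).trans_lt (hi₀.trans_lt (hc i₀)))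
  -- `σ` maps the goods that are not dearer under `q` to themselves, hence also the dearer ones, so
  -- `σ` and the identity can be used side by side.
  have hle : ∀ i, q i ≤ p i → q (σ i) ≤ p (σ i) := fun i hi =>
    (anti i (σ i)).le_iff_ge.1 <| calc
      u i (σ i) (p (σ i)) ≤ u i i (p i) := hp i (σ i)
      _ ≤ u i i (q i) := (anti i i).antitone hi
      _ ≤ u i (σ i) (q (σ i)) := hq i i
  have hbij : Set.BijOn σ {i | q i ≤ p i} {i | q i ≤ p i} :=
    ((Set.toFinite _).injOn_iff_bijOn_of_mapsTo hle).1 σ.injective.injOn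
  have hlt : ∀ i, p (σ i) < q (σ i) ↔ p i < q i := fun i => by
    rw [← not_le, ← not_le, not_iff_not]
    refine ⟨fun hσi => ?_, hle i⟩
    obtain ⟨k, hk, hkσ⟩ := hbij.surjOn hσi
    exact σ.injective hkσ ▸ hk
  let π : Equiv.Perm ι := (σ.subtypePerm (p := fun i => p i < q i) hlt).ofSubtype
  refine ⟨p ⊔ q, π, fun g => le_sup_left, ⟨i₀, lt_sup_of_lt_right hi₀q⟩, ?_⟩
  rw [← forall_and]
  intro i
  by_cases hi : p i < q i
  · have hπ : π i = σ i :=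
      Equiv.Perm.ofSubtype_apply_of_mem (σ.subtypePerm (p := fun i => p i < q i) hlt) hi
    have hmax : (p ⊔ q) (σ i) = q (σ i) := sup_eq_right.2 ((hlt i).2 hi).le
    rw [hπ, hmax]
    exact ⟨fun g => ((anti i g).antitone le_sup_right).trans (hq i g), hcq i⟩
  · have hπ : π i = i := Equiv.Perm.ofSubtype_apply_of_not_mem _ hi
    have hmax : (p ⊔ q) i = p i := sup_eq_left.2 (not_lt.1 hi)
    rw [hπ, hmax]
    exact ⟨fun g => ((anti i g).antitone le_sup_left).trans (hp i g), (hc i).le⟩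

end SquareMarket

theorem exists_injective_path_of_reflTransGen {α : Type*} {r : α → α → Prop} {a x : α}
    (h : Relation.ReflTransGen r a x) :
    ∃ (m : ℕ) (g : Fin (m + 1) → α), g 0 = a ∧ g (Fin.last m) = x ∧ Function.Injective g ∧
      ∀ k : Fin m, r (g k.castSucc) (g k.succ) := by
  induction h with
  | refl =>
    exact ⟨0, fun _ => a, rfl, rfl, fun k l _ => Subsingleton.elim (α := Fin 1) k l,
      fun k => k.elim0⟩
  | @tail y z _ hyz ih =>
    obtain ⟨m, g, hg0, rfl, hinj, hstep⟩ := ih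
    by_cases hz : z ∈ Set.range g
    · obtain ⟨k, rfl⟩ := hz
      exact ⟨k, g ∘ Fin.castLE k.2, hg0, rfl, hinj.comp (Fin.castLE_injective _),
        fun l => hstep (l.castLE (Nat.le_of_lt_succ k.2))⟩
    · refine ⟨m + 1, Fin.snoc (α := fun _ => α) g z, ?_, by simp,
        Fin.snoc_injective_iff.2 ⟨hinj, hz⟩, ?_⟩
      · simpa using hg0
      · intro k
        induction k using Fin.lastCases with
        | last => simpa using hyz
        | cast k => simpa [← Fin.castSucc_succ] using hstep k

section Equilibrium

variable {I J : Type} [Fintype I] [Fintype J] {M : Market I J} {p : J → ℝ} {w : I → ℝ}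
  {μ : I → Option J}

theorem IsEquilib.map_perm (h : IsEquilib M p w μ) {R : Set J} {p' : J → ℝ} {π : Equiv.Perm J}
    (hmatched : ∀ g ∈ R, ∃ i, μ i = some g) (hp : ∀ g, p g ≤ p' g) (hpR : ∀ g ∉ R, p' g = p g)
    (hπR : ∀ g ∉ R, π g = g)
    (hbest : ∀ i, ∀ g ∈ R, μ i = some g → ∀ g', M.u i g' (p' g') ≤ M.u i (π g) (p' (π g)))
    (hnonneg : ∀ i, ∀ g ∈ R, μ i = some g → 0 ≤ M.u i (π g) (p' (π g))) :
    ∃ w', IsEquilib M p' w' fun i => (μ i).map π := by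
  obtain ⟨hinj, hp0, hw0, hμ, hle, hnone, hunm⟩ := h
  have hle' : ∀ i g, M.u i g (p' g) ≤ w i := fun i g =>
    ((M.anti i g).antitone (hp g)).trans (hle i g)
  have hkeep : ∀ i, ∀ g ∉ R, μ i = some g → M.u i (π g) (p' (π g)) = w i := fun i g hg hi => by
    rw [hπR g hg, hpR g hg, hμ i g hi]
  refine ⟨fun i => (μ i).elim 0 fun g => M.u i (π g) (p' (π g)),
    fun i i' g hi hi' => ?_, fun g => (hp0 g).trans (hp g), fun i => ?_, fun i g hi => ?_,
    fun i g => ?_, fun i hi => ?_, fun g hg => ?_⟩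
  · rw [Option.map_eq_some_iff] at hi hi'
    obtain ⟨⟨g₁, hg₁, rfl⟩, g₂, hg₂, hg⟩ := hi, hi'
    exact hinj i i' g₁ hg₁ (π.injective hg ▸ hg₂)
  · rcases hi : μ i with _ | g
    · simp [hi]
    · by_cases hg : g ∈ R
      · simpa [hi] using hnonneg i g hg hi
      · simpa [hi, hkeep i g hg hi] using hw0 i
  · obtain ⟨g', hg', rfl⟩ := Option.map_eq_some_iff.1 hi
    simp [hg']
  · rcases hi : μ i with _ | g'
    · simpa [hi, hnone i hi] using hle' i g
    · by_cases hg' : g' ∈ R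
      · simpa [hi] using hbest i g' hg' hi g
      · simpa [hi, hkeep i g' hg' hi] using hle' i g
  · simp [Option.map_eq_none_iff.1 hi]
  · have hpre : ∀ i, μ i ≠ some (π.symm g) := fun i hi => hg i (by simp [hi])
    have hR : π.symm g ∉ R := fun hmem => (hmatched _ hmem).elim hpre
    have hπg : π.symm g = g := by simpa using (hπR _ hR).symm
    rw [hπg] at hpre hR
    exact (hpR g hR).trans (hunm g hpre)

/-- The step of a tight alternating path along the matching edge from `g` to its buyer and a tight
edge from this buyer to `g'`. -/
def TightStep (M : Market I J) (p : J → ℝ) (w : I → ℝ) (μ : I → Option J) (g g' : J) : Prop :=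
  ∃ i, μ i = some g ∧ w i = M.u i g' (p g')

theorem IsEquilib.exists_outside_option (h : IsEquilib M p w μ) {i : I} (hi : 0 < w i)
    {R : Set J} (hR : ∀ g, w i = M.u i g (p g) → g ∈ R) :
    ∃ c, 0 ≤ c ∧ c < w i ∧ ∀ g ∉ R, M.u i g (p g) ≤ c := by
  obtain ⟨-, -, -, -, hle, -⟩ := h
  have hout : ∀ g, ∀ᶠ c in 𝓝[<] w i, g ∉ R → M.u i g (p g) ≤ c := fun g => by
    by_cases hg : g ∈ R
    · simp [hg]
    · have hlt : M.u i g (p g) < w i := (hle i g).lt_of_ne fun heq => hg (hR g heq.symm)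
      filter_upwards [Ioo_mem_nhdsLT hlt] with c hc _ using hc.1.le
  have hbelow : ∀ᶠ c in 𝓝[<] w i, c ∈ Set.Ioo 0 (w i) := Ioo_mem_nhdsLT hi
  obtain ⟨c, hc, hcout⟩ := (hbelow.and (eventually_all.2 hout)).exists
  exact ⟨c, hc.1.le, hc.2, hcout⟩

theorem IsEquilib.exists_extend_of_perm (h : IsEquilib M p w μ) {R : Set J} {b : R → I}
    (hb : ∀ g, μ (b g) = some ↑g) {q : R → ℝ} {π : Equiv.Perm R} (hpq : ∀ g : R, p g ≤ q g)
    (hin : ∀ g g' : R, M.u (b g) g' (q g') ≤ M.u (b g) (π g) (q (π g)))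
    (hout : ∀ g : R, ∀ g' ∉ R, M.u (b g) g' (p g') ≤ M.u (b g) (π g) (q (π g)))
    (hnonneg : ∀ g, 0 ≤ M.u (b g) (π g) (q (π g))) :
    ∃ p' w' μ', IsEquilib M p' w' μ' ∧ ∀ g : R, p' g = q g := by
  let p' : J → ℝ := fun g => if hg : g ∈ R then q ⟨g, hg⟩ else p g
  let π' : Equiv.Perm J := π.ofSubtype
  have hp'R : ∀ g : R, p' g = q g := fun g => dif_pos g.2
  have hp'out : ∀ g ∉ R, p' g = p g := fun g hg => dif_neg hg
  have hπ'out : ∀ g ∉ R, π' g = g := fun g hg => Equiv.Perm.ofSubtype_apply_of_not_mem π hg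
  have hpp' : ∀ g, p g ≤ p' g := fun g => by
    by_cases hg : g ∈ R
    · exact (hpq ⟨g, hg⟩).trans_eq (hp'R ⟨g, hg⟩).symm
    · exact (hp'out g hg).ge
  have hbuyer : ∀ i (g : R), μ i = some ↑g → i = b g := fun i g hi => h.1 _ _ _ hi (hb g)
  have hpayoff : ∀ g : R, M.u (b g) (π' g) (p' (π' g)) = M.u (b g) (π g) (q (π g)) := fun g => by
    rw [Equiv.Perm.ofSubtype_apply_coe, hp'R]
  have hbest : ∀ i, ∀ g ∈ R, μ i = some g →
      ∀ g', M.u i g' (p' g') ≤ M.u i (π' g) (p' (π' g)) := fun i g hg hi g' => by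
    obtain rfl := hbuyer i ⟨g, hg⟩ hi
    refine le_of_le_of_eq ?_ (hpayoff ⟨g, hg⟩).symm
    by_cases hg' : g' ∈ R
    · exact hp'R ⟨g', hg'⟩ ▸ hin ⟨g, hg⟩ ⟨g', hg'⟩
    · exact hp'out g' hg' ▸ hout ⟨g, hg⟩ g' hg'
  obtain ⟨w', h'⟩ := h.map_perm (fun g hg => ⟨_, hb ⟨g, hg⟩⟩) hpp' hp'out hπ'out hbest
    fun i g hg hi => by
      obtain rfl := hbuyer i ⟨g, hg⟩ hi
      exact (hnonneg ⟨g, hg⟩).trans_eq (hpayoff ⟨g, hg⟩).symm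
  exact ⟨p', w', _, h', hp'R⟩

theorem IsEquilib.exists_lt_price (h : IsEquilib M p w μ) {R : Set J} (hne : R.Nonempty)
    (hmatched : ∀ g ∈ R, ∃ i, μ i = some g) (hpos : ∀ g ∈ R, ∀ i, μ i = some g → 0 < w i)
    (hclosed : ∀ g ∈ R, ∀ g', TightStep M p w μ g g' → g' ∈ R) :
    ∃ p' w' μ', IsEquilib M p' w' μ' ∧ ∃ g, p g < p' g := by
  obtain ⟨-, -, -, hμ, hle, -⟩ := id h
  have := hne.to_subtype
  choose b hb using fun g : R => hmatched g g.2
  choose c hc0 hcw hcout using fun g : R => h.exists_outside_option (hpos g g.2 _ (hb g))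
    fun g' hg' => hclosed g g.2 g' ⟨b g, hb g, hg'⟩
  have hown : ∀ g : R, w (b g) = M.u (b g) g (p g) := fun g => hμ _ _ (hb g)
  obtain ⟨q, π, hpq, ⟨g₀, hg₀⟩, hbest, hcq⟩ :=
    exists_raised_prices (u := fun x g : R => M.u (b x) g) (c := c) (p := fun g => p g)
      (fun x g => M.anti (b x) g) (fun x g => M.surj (b x) g)
      (fun x g => (hle (b x) g).trans_eq (hown x)) (fun x => (hcw x).trans_eq (hown x))
  obtain ⟨p', w', μ', h', hp'⟩ := h.exists_extend_of_perm hb hpq hbest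
    (fun g g' hg' => (hcout g g' hg').trans (hcq g)) fun g => (hc0 g).trans (hcq g)
  exact ⟨p', w', μ', h', g₀, hg₀.trans_eq (hp' g₀).symm⟩

theorem IsHighest.exists_tight_reachable_end (h : IsHighest M p w μ) (j : J) :
    ∃ g, Relation.ReflTransGen (TightStep M p w μ) j g ∧
      ((∀ i, μ i ≠ some g) ∨ ∃ i, μ i = some g ∧ w i = 0) := by
  by_contra! hcon
  obtain ⟨-, -, hw0, -⟩ := h.1
  obtain ⟨p', w', μ', h', g, hg⟩ := h.1.exists_lt_price
    (R := {g | Relation.ReflTransGen (TightStep M p w μ) j g}) ⟨j, .refl⟩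
    (fun g hg => (hcon g hg).1) (fun g hg i hi => (hw0 i).lt_of_ne' ((hcon g hg).2 i hi))
    (fun g hg g' => hg.tail)
  exact (h.2 p' w' μ' h' g).not_gt hg

end Equilibrium

theorem injective_of_forall_eq_some {κ α β : Type*} {f : α → Option β} {g : κ → β} {b : κ → α}
    (hg : Function.Injective g) (h : ∀ k, f (b k) = some (g k)) : Function.Injective b :=
  fun k l hkl => hg (Option.some.inj ((h k).symm.trans (hkl ▸ h l)))

/-- Critical alternating path at the highest equilibrium: for every good `j`
there is a tight alternating path (starting at `j` with a matching edge, or of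
length 0) ending at an unmatched good or at a buyer with payoff `0`. -/
theorem critical_path_highest {I J : Type} [Fintype I] [Fintype J] (M : Market I J)
    (p : J → ℝ) (w : I → ℝ) (μ : I → Option J) (h : IsHighest M p w μ) (j : J) :
    -- either a path j = g 0, b 0, g 1, b 1, ..., g m with `g m` unmatched
    (∃ (m : ℕ) (g : Fin (m+1) → J) (b : Fin m → I),
      g 0 = j ∧ Function.Injective g ∧ Function.Injective b ∧
      (∀ k : Fin m, μ (b k) = some (g k.castSucc)) ∧
      (∀ k : Fin m, w (b k) = M.u (b k) (g k.succ) (p (g k.succ))) ∧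
      (∀ i, μ i ≠ some (g (Fin.last m)))) ∨
    -- or a path j = g 0, b 0, g 1, b 1, ..., g m, b m with `w (b m) = 0`
    (∃ (m : ℕ) (g : Fin (m+1) → J) (b : Fin (m+1) → I),
      g 0 = j ∧ Function.Injective g ∧ Function.Injective b ∧
      (∀ k : Fin (m+1), μ (b k) = some (g k)) ∧
      (∀ k : Fin m, w (b k.castSucc) = M.u (b k.castSucc) (g k.succ) (p (g k.succ))) ∧
      w (b (Fin.last m)) = 0) := by
  obtain ⟨x, hjx, hx⟩ := h.exists_tight_reachable_end j
  obtain ⟨m, g, hg0, rfl, hg, hstep⟩ := exists_injective_path_of_reflTransGen hjx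
  choose b hbμ hbw using hstep
  rcases hx with hfree | ⟨i, hi, hwi⟩
  · exact Or.inl ⟨m, g, b, hg0, hg,
      injective_of_forall_eq_some (hg.comp (Fin.castSucc_injective m)) hbμ, hbμ, hbw, hfree⟩
  · let b' : Fin (m + 1) → I := Fin.snoc b i
    have hb'μ : ∀ k, μ (b' k) = some (g k) :=
      Fin.lastCases (by simpa [b'] using hi) fun k => by simpa [b'] using hbμ k
    exact Or.inr ⟨m, g, b', hg0, hg, injective_of_forall_eq_some hg hb'μ, hb'μ,
      fun k => by simpa [b'] using hbw k, by simpa [b'] using hwi⟩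
end
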